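/- Let φ₀, φ₁ ∈ C₀^∞(ℝ²) and let φ be the smooth solution of the free wave equation □φ = 0 with φ(0) = φ₀, ∂ₜφ(0) = φ₁. There is a constant C = C(φ₀,φ₁) > 0 such that for all (t,x) ∈ [0,∞)×(ℝ²∖{0}) and a = 0,1,2, with the convention ω₀ = −1, ω₁ = x₁/|x|, ω₂ = x₂/|x| and ∂₀ = ∂ₜ: ||x|^{1/2}∂_aφ(t,x) − ω_a(∂_σF₀[φ₀,φ₁])(|x|−t, x/|x|)| ≤ C⟨t+|x|⟩^{−1}⟨t−|x|⟩^{−1/2}. -/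

import Mathlib

/-!
The wave equation and the radiation field are invariant under rotations, so it is enough to treat
points `(r, 0)` of the positive `x₁`-axis; there it has to be shown that `√r ∂ₜφ + ∂_σF₀`,
`√r ∂₁φ - ∂_σF₀` and `√r ∂₂φ` are `O(⟨t+r⟩⁻¹⟨t-r⟩^{-1/2})`.

Each `u = ∂_aφ` solves the wave equation, so that `rep_formula` expresses `u(t, r, 0)` as an
integral of the Cauchy data `(f, g)` of `u` over a half-sphere (the two-dimensional Poisson formula,
seen as a spherical mean in one dimension more). On the other side, `∂_σ R₂[ψ] = R₂[∂₁ψ]` and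
`R₂[∂₂ψ] = 0` in the direction `(1, 0)`, by differentiating and integrating along the lines of the
Radon transform, so that the three claims all take the form
`√r u(t, r, 0) - R₂[g - ∂₁f](r - t) = O(⟨t+r⟩⁻¹⟨t-r⟩^{-1/2})`. This is `Dat.core`.

* For `t - r < -R`, with `R` the radius of the support of the data, both terms vanish.
* For `-R ≤ t - r ≤ 2R` the weight is comparable to `1/t` for large `t`. Only latitudes of size
  `t^{-1/2}` on the half-sphere meet the support. Rescaling the latitude by `√(2/t)`, and the
  longitude to arc length, turns the half-sphere into the parabolic parametrisation
  `(σ + v², τ)` which the substitution `s = σ + v²` produces in `R₂`, up to errors `O(1/t)`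
  (`Dat.near`). Bounded `t` is covered by crude bounds (`Dat.bounded`).
* For `t - r ≥ 2R` both kernels are smooth on the support and everything can be written as an
  integral in Cartesian coordinates. Bounding the kernels by their size is not sufficient; but `∂₁f`
  and `g` have mean zero, both being sums of derivatives of test functions, so the kernels may be
  replaced by their oscillation over the support (`far_kernel`, `Dat.far`). The factor `1/t` then
  comes from the difference of the exact and the limiting kernel.

The mean zero property of `g` holds for `∂₁φ` and `∂₂φ` because `g = ∂_aφ₁`, and for `∂ₜφ` because
`g = Δφ₀`.
-/

open Real MeasureTheory Filter Topology

noncomputable section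

/-- Partial derivative in `t`. -/
def pt (u : ℝ → ℝ → ℝ → ℝ) : ℝ → ℝ → ℝ → ℝ :=
  fun t x1 x2 => deriv (fun s => u s x1 x2) t

/-- Partial derivative in `x₁`. -/
def p1 (u : ℝ → ℝ → ℝ → ℝ) : ℝ → ℝ → ℝ → ℝ :=
  fun t x1 x2 => deriv (fun y => u t y x2) x1

/-- Partial derivative in `x₂`. -/
def p2 (u : ℝ → ℝ → ℝ → ℝ) : ℝ → ℝ → ℝ → ℝ :=
  fun t x1 x2 => deriv (fun y => u t x1 y) x2

/-- The d'Alembertian `□ = ∂ₜ² − ∂₁² − ∂₂²`. -/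
def dAlembert (u : ℝ → ℝ → ℝ → ℝ) : ℝ → ℝ → ℝ → ℝ :=
  fun t x1 x2 => pt (pt u) t x1 x2 - p1 (p1 u) t x1 x2 - p2 (p2 u) t x1 x2

/-- `u : ℝ×ℝ² → ℝ` (curried) is C^∞. -/
def Smooth3 (u : ℝ → ℝ → ℝ → ℝ) : Prop :=
  ContDiff ℝ (⊤ : ℕ∞) (fun p : ℝ × ℝ × ℝ => u p.1 p.2.1 p.2.2)

/-- Compactly supported C^∞ function on ℝ². -/
def SmoothCompact2 (f : ℝ → ℝ → ℝ) : Prop :=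
  ContDiff ℝ (⊤ : ℕ∞) (fun p : ℝ × ℝ => f p.1 p.2) ∧
    HasCompactSupport (fun p : ℝ × ℝ => f p.1 p.2)

/-- Global C^∞ solution of the Cauchy problem
`□u₁ = −(∂ₜu₂)²∂ₜu₁`, `□u₂ = −(∂ₜu₁)²∂ₜu₂` with data `(εf_j, εg_j)`. -/
structure IsSolution (ε : ℝ) (f1 f2 g1 g2 : ℝ → ℝ → ℝ)
    (u1 u2 : ℝ → ℝ → ℝ → ℝ) : Prop where
  smooth1 : Smooth3 u1
  smooth2 : Smooth3 u2
  pde1 : ∀ t x1 x2 : ℝ, 0 < t →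
    dAlembert u1 t x1 x2 = -(pt u2 t x1 x2) ^ 2 * pt u1 t x1 x2
  pde2 : ∀ t x1 x2 : ℝ, 0 < t →
    dAlembert u2 t x1 x2 = -(pt u1 t x1 x2) ^ 2 * pt u2 t x1 x2
  init1 : ∀ x1 x2 : ℝ, u1 0 x1 x2 = ε * f1 x1 x2
  init2 : ∀ x1 x2 : ℝ, u2 0 x1 x2 = ε * f2 x1 x2
  initd1 : ∀ x1 x2 : ℝ, pt u1 0 x1 x2 = ε * g1 x1 x2
  initd2 : ∀ x1 x2 : ℝ, pt u2 0 x1 x2 = ε * g2 x1 x2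

/-- `‖u(t)‖_E²  = ½∫ ((∂ₜu)² + (∂₁u)² + (∂₂u)²) dx`. -/
def energySq (u : ℝ → ℝ → ℝ → ℝ) (t : ℝ) : ℝ :=
  (1 / 2) * ∫ x : ℝ × ℝ,
    ((pt u t x.1 x.2) ^ 2 + (p1 u t x.1 x.2) ^ 2 + (p2 u t x.1 x.2) ^ 2)

/-- The energy norm `‖u(t)‖_E`. -/
def energyNorm (u : ℝ → ℝ → ℝ → ℝ) (t : ℝ) : ℝ :=
  Real.sqrt (energySq u t)

/-- `|x|` in coordinates. -/
def radius (x1 x2 : ℝ) : ℝ := Real.sqrt (x1 ^ 2 + x2 ^ 2)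

/-- The Japanese bracket `⟨z⟩ = (1+z²)^{1/2}`. -/
def jb (z : ℝ) : ℝ := Real.sqrt (1 + z ^ 2)

/-- `U(t,x) = D(|x|^{1/2}u(t,x))` where `D = ½(∂_r − ∂ₜ)`. -/
def Uop (u : ℝ → ℝ → ℝ → ℝ) : ℝ → ℝ → ℝ → ℝ :=
  fun t x1 x2 =>
    (1 / 2) * ((x1 / radius x1 x2) *
        p1 (fun s y1 y2 => radius y1 y2 ^ ((1 : ℝ) / 2) * u s y1 y2) t x1 x2
      + (x2 / radius x1 x2) *
        p2 (fun s y1 y2 => radius y1 y2 ^ ((1 : ℝ) / 2) * u s y1 y2) t x1 x2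
      - pt (fun s y1 y2 => radius y1 y2 ^ ((1 : ℝ) / 2) * u s y1 y2) t x1 x2)

/-- `V(t;σ,ω) = U(t,(t+σ)ω)`. -/
def Vop (u : ℝ → ℝ → ℝ → ℝ) (t σ ω1 ω2 : ℝ) : ℝ :=
  Uop u t ((t + σ) * ω1) ((t + σ) * ω2)

/-- The rotation vector field `Ω = x₁∂₂ − x₂∂₁`. -/
def rot (u : ℝ → ℝ → ℝ → ℝ) : ℝ → ℝ → ℝ → ℝ :=
  fun t x1 x2 => x1 * p2 u t x1 x2 - x2 * p1 u t x1 x2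

/-- `H` for component `a` (the other component being `b`):
`H_a = ½(|x|^{1/2}(∂ₜu_b)²(∂ₜu_a) + t⁻¹U_b²U_a) − (8|x|^{3/2})⁻¹(4Ω²+1)u_a`. -/
def Hfun (ua ub : ℝ → ℝ → ℝ → ℝ) (t x1 x2 : ℝ) : ℝ :=
  (1 / 2) * (radius x1 x2 ^ ((1 : ℝ) / 2) * (pt ub t x1 x2) ^ 2 * pt ua t x1 x2
      + (1 / t) * (Uop ub t x1 x2) ^ 2 * Uop ua t x1 x2)
    - (1 / (8 * radius x1 x2 ^ ((3 : ℝ) / 2))) *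
        (4 * rot (rot ua) t x1 x2 + ua t x1 x2)

/-- `K_a(t;σ,ω) = H_a(t,(t+σ)ω)`. -/
def Kfun (ua ub : ℝ → ℝ → ℝ → ℝ) (t σ ω1 ω2 : ℝ) : ℝ :=
  Hfun ua ub t ((t + σ) * ω1) ((t + σ) * ω2)

/-- `ρ = V₁K₁ − V₂K₂`. -/
def rhoFun (u1 u2 : ℝ → ℝ → ℝ → ℝ) (t σ ω1 ω2 : ℝ) : ℝ :=
  Vop u1 t σ ω1 ω2 * Kfun u1 u2 t σ ω1 ω2 -
    Vop u2 t σ ω1 ω2 * Kfun u2 u1 t σ ω1 ω2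

/-- The Radon transform: line integral of `φ` over `{y : y·ω = s}`. -/
def Rline (φ : ℝ → ℝ → ℝ) (s ω1 ω2 : ℝ) : ℝ :=
  ∫ τ : ℝ, φ (s * ω1 - τ * ω2) (s * ω2 + τ * ω1)

/-- `R₂[φ](σ,ω) = (2√2π)⁻¹ ∫_σ^∞ R[φ](s,ω)(s−σ)^{−1/2} ds`. -/
def R2 (φ : ℝ → ℝ → ℝ) (σ ω1 ω2 : ℝ) : ℝ :=
  (1 / (2 * Real.sqrt 2 * Real.pi)) *
    ∫ s in Set.Ioi σ, Rline φ s ω1 ω2 / Real.sqrt (s - σ)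

/-- The Friedlander radiation field `F₀[φ,ψ] = −∂_σR₂[φ] + R₂[ψ]`. -/
def F0 (φ ψ : ℝ → ℝ → ℝ) (σ ω1 ω2 : ℝ) : ℝ :=
  -deriv (fun σ' => R2 φ σ' ω1 ω2) σ + R2 ψ σ ω1 ω2

/-- `∂_σF₀[φ,ψ]`. -/
def dF0 (φ ψ : ℝ → ℝ → ℝ) (σ ω1 ω2 : ℝ) : ℝ :=
  deriv (fun σ' => F0 φ ψ σ' ω1 ω2) σ

/-- The vector fields `Γ = (S, L₁, L₂, Ω, ∂ₜ, ∂₁, ∂₂)`. -/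
def Gam (i : Fin 7) (u : ℝ → ℝ → ℝ → ℝ) : ℝ → ℝ → ℝ → ℝ :=
  match i with
  | 0 => fun t x1 x2 => t * pt u t x1 x2 + x1 * p1 u t x1 x2 + x2 * p2 u t x1 x2
  | 1 => fun t x1 x2 => t * p1 u t x1 x2 + x1 * pt u t x1 x2
  | 2 => fun t x1 x2 => t * p2 u t x1 x2 + x2 * pt u t x1 x2
  | 3 => rot u
  | 4 => pt u
  | 5 => p1 u
  | 6 => p2 u

/-- `Γ^α = Γ₀^{α₀}⋯Γ₆^{α₆}`. -/
def GamMulti (α : Fin 7 → ℕ) (u : ℝ → ℝ → ℝ → ℝ) : ℝ → ℝ → ℝ → ℝ :=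
  (Gam 0)^[α 0] ((Gam 1)^[α 1] ((Gam 2)^[α 2] ((Gam 3)^[α 3]
    ((Gam 4)^[α 4] ((Gam 5)^[α 5] ((Gam 6)^[α 6] u))))))

/-- Pointwise norm `|φ(t,x)|_s = Σ_{|α|≤s}|Γ^αφ(t,x)|`, for a (finite) family of
components, `|Γ^αφ|` being the Euclidean norm of the vector of components. -/
def ptwiseNorm (s : ℕ) (us : List (ℝ → ℝ → ℝ → ℝ)) (t x1 x2 : ℝ) : ℝ :=
  ∑ α : Fin 7 → Fin (s + 1),
    if (∑ i, (α i : ℕ)) ≤ s then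
      Real.sqrt ((us.map fun u => (GamMulti (fun i => (α i : ℕ)) u t x1 x2) ^ 2).sum)
    else 0

/-- `‖φ(t)‖_s = Σ_{|α|≤s}‖Γ^αφ(t,·)‖_{L²(ℝ²)}`. -/
def sobNorm (s : ℕ) (us : List (ℝ → ℝ → ℝ → ℝ)) (t : ℝ) : ℝ :=
  ∑ α : Fin 7 → Fin (s + 1),
    if (∑ i, (α i : ℕ)) ≤ s then
      Real.sqrt (∫ x : ℝ × ℝ,
        (us.map fun u => (GamMulti (fun i => (α i : ℕ)) u t x.1 x.2) ^ 2).sum)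
    else 0

/-- The components of `∂u = (∂ₜu₁,∂₁u₁,∂₂u₁,∂ₜu₂,∂₁u₂,∂₂u₂)`. -/
def dList (u1 u2 : ℝ → ℝ → ℝ → ℝ) : List (ℝ → ℝ → ℝ → ℝ) :=
  [pt u1, p1 u1, p2 u1, pt u2, p1 u2, p2 u2]

/-- Smooth solution of the free wave equation with data `(φ0,φ1)`. -/
def IsFreeSolution (φ0 φ1 : ℝ → ℝ → ℝ) (φ : ℝ → ℝ → ℝ → ℝ) : Prop :=
  Smooth3 φ ∧ (∀ t x1 x2 : ℝ, 0 < t → dAlembert φ t x1 x2 = 0) ∧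
    (∀ x1 x2 : ℝ, φ 0 x1 x2 = φ0 x1 x2) ∧
    (∀ x1 x2 : ℝ, pt φ 0 x1 x2 = φ1 x1 x2)

/-- Mixed space-time partial `∂^α = ∂ₜ^{α₀}∂₁^{α₁}∂₂^{α₂}`. -/
def dmix (α : Fin 3 → ℕ) (u : ℝ → ℝ → ℝ → ℝ) : ℝ → ℝ → ℝ → ℝ :=
  pt^[α 0] (p1^[α 1] (p2^[α 2] u))

/-! ### Directional derivatives and parametric integrals -/

/-- Directional derivative of `U` along the constant vector `v`. -/
def dd {E : Type*} [NormedAddCommGroup E] [NormedSpace ℝ E] (v : E) (U : E → ℝ) : E → ℝ :=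
  fun p => fderiv ℝ U p v

section dd
variable {E F : Type*} [NormedAddCommGroup E] [NormedSpace ℝ E]
  [NormedAddCommGroup F] [NormedSpace ℝ F]

theorem dd_smooth {U : E → ℝ} (hU : ContDiff ℝ (⊤ : ℕ∞) U) (v : E) :
    ContDiff ℝ (⊤ : ℕ∞) (dd v U) := by
  unfold dd
  exact (hU.fderiv_right (m := (⊤ : ℕ∞)) (by simp)).clm_apply contDiff_const

theorem smooth_diff {U : E → ℝ} (hU : ContDiff ℝ (⊤ : ℕ∞) U) : Differentiable ℝ U :=
  hU.differentiable (by simp)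

theorem dd_comp {U : F → ℝ} (hU : ContDiff ℝ (⊤ : ℕ∞) U) (L : E →L[ℝ] F) (v : E) :
    dd v (fun p => U (L p)) = fun p => dd (L v) U (L p) := by
  ext p
  have h := (smooth_diff hU (L p)).hasFDerivAt.comp p L.hasFDerivAt
  have h2 : fderiv ℝ (fun p => U (L p)) p = (fderiv ℝ U (L p)).comp L := h.fderiv
  simp [dd, h2]

theorem dd_lin (U : E → ℝ) (a b : ℝ) (v w : E) :
    dd (a • v + b • w) U = fun p => a * dd v U p + b * dd w U p := by
  ext p; simp [dd]

theorem dd_add {U V : E → ℝ} (hU : ContDiff ℝ (⊤ : ℕ∞) U) (hV : ContDiff ℝ (⊤ : ℕ∞) V)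
    (a b : ℝ) (v : E) :
    dd v (fun p => a * U p + b * V p) = fun p => a * dd v U p + b * dd v V p := by
  ext p
  have h := ((smooth_diff hU p).hasFDerivAt.const_mul a).add
    ((smooth_diff hV p).hasFDerivAt.const_mul b)
  have h2 : fderiv ℝ (fun p => a * U p + b * V p) p = a • fderiv ℝ U p + b • fderiv ℝ V p :=
    h.fderiv
  simp [dd, h2]

theorem dd_dd {U : E → ℝ} (hU : ContDiff ℝ (⊤ : ℕ∞) U) (v w : E) (p : E) :
    dd v (dd w U) p = fderiv ℝ (fderiv ℝ U) p v w := by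
  have hd : DifferentiableAt ℝ (fderiv ℝ U) p :=
    (hU.fderiv_right (m := (⊤ : ℕ∞)) (by simp)).differentiable (by simp) p
  have := (hd.hasFDerivAt.clm_apply (hasFDerivAt_const w p)).fderiv
  unfold dd
  rw [this]; simp

theorem dd_comm {U : E → ℝ} (hU : ContDiff ℝ (⊤ : ℕ∞) U) (v w : E) :
    dd v (dd w U) = dd w (dd v U) := by
  ext p
  rw [dd_dd hU, dd_dd hU]
  have := (hU.contDiffAt (x := p)).isSymmSndFDerivAt (by
    simp only [minSmoothness_of_isRCLikeNormedField]
    exact WithTop.coe_le_coe.2 (le_top : (2 : ℕ∞) ≤ ⊤))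
  exact this.eq v w

theorem dd_congr {U V : E → ℝ} {s : Set E} (hs : IsOpen s) (h : ∀ p ∈ s, U p = V p) (v : E) :
    ∀ p ∈ s, dd v U p = dd v V p := by
  intro p hp
  have : U =ᶠ[𝓝 p] V := Filter.eventuallyEq_of_mem (hs.mem_nhds hp) h
  simp [dd, this.fderiv_eq]

theorem dd_curve {U : E → ℝ} (hU : ContDiff ℝ (⊤ : ℕ∞) U) {c : ℝ → E} {c' : E} {s : ℝ}
    (hc : HasDerivAt c c' s) : HasDerivAt (fun s => U (c s)) (dd c' U (c s)) s :=
  (smooth_diff hU (c s)).hasFDerivAt.comp_hasDerivAt s hc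

end dd

/-- Differentiation under a double integral over a rectangle, for jointly continuous integrands. -/
theorem hasDerivAt_parint (k k' : ℝ → ℝ → ℝ) (a b l : ℝ)
    (hk : Continuous (fun q : ℝ × ℝ => k q.1 q.2)) (hk' : Continuous (fun q : ℝ × ℝ => k' q.1 q.2))
    (h : ∀ l x, HasDerivAt (fun l => k l x) (k' l x) l) :
    HasDerivAt (fun l => ∫ x in a..b, k l x) (∫ x in a..b, k' l x) l := by
  have hc : IsCompact (Set.Icc (l-1) (l+1) ×ˢ Set.uIcc a b) := isCompact_Icc.prod isCompact_uIcc
  obtain ⟨C, hC⟩ := hc.exists_bound_of_continuousOn hk'.continuousOn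
  refine (intervalIntegral.hasDerivAt_integral_of_dominated_loc_of_deriv_le
    (s := Set.Icc (l-1) (l+1)) (bound := fun _ => C) (Icc_mem_nhds (by linarith) (by linarith))
    ?_ ?_ ?_ ?_ ?_ ?_).2
  · refine Eventually.of_forall fun x => ?_
    have : Continuous (k x) := hk.comp (by fun_prop : Continuous fun y : ℝ => (x, y))
    exact this.aestronglyMeasurable
  · have : Continuous (k l) := hk.comp (by fun_prop : Continuous fun y : ℝ => (l, y))
    exact this.intervalIntegrable _ _
  · have : Continuous (k' l) := hk'.comp (by fun_prop : Continuous fun y : ℝ => (l, y))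
    exact this.aestronglyMeasurable
  · refine Eventually.of_forall fun x hx y hy => hC (y, x) ⟨hy, Set.uIoc_subset_uIcc hx⟩
  · simp
  · exact Eventually.of_forall fun x hx y hy => h y x

theorem cont_parint (k : ℝ → ℝ → ℝ) (a b : ℝ)
    (hk : Continuous (fun q : ℝ × ℝ => k q.1 q.2)) :
    Continuous (fun l => ∫ x in a..b, k l x) :=
  intervalIntegral.continuous_parametric_intervalIntegral_of_continuous' (by simpa [Function.uncurry_def] using hk) a b

theorem cont_parint2 (k : ℝ → ℝ → ℝ → ℝ) (c d : ℝ)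
    (hk : Continuous (fun q : ℝ × ℝ × ℝ => k q.1 q.2.1 q.2.2)) :
    Continuous (fun q : ℝ × ℝ => ∫ y in c..d, k q.1 q.2 y) :=
  intervalIntegral.continuous_parametric_intervalIntegral_of_continuous'
    (f := fun (q : ℝ × ℝ) y => k q.1 q.2 y)
    (hk.comp (by fun_prop : Continuous fun q : (ℝ × ℝ) × ℝ => (q.1.1, q.1.2, q.2))) c d

theorem hasDerivAt_parint2 (k k' : ℝ → ℝ → ℝ → ℝ) (a b c d l : ℝ)
    (hk : Continuous (fun q : ℝ × ℝ × ℝ => k q.1 q.2.1 q.2.2))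
    (hk' : Continuous (fun q : ℝ × ℝ × ℝ => k' q.1 q.2.1 q.2.2))
    (h : ∀ l x y, HasDerivAt (fun l => k l x y) (k' l x y) l) :
    HasDerivAt (fun l => ∫ x in a..b, ∫ y in c..d, k l x y)
      (∫ x in a..b, ∫ y in c..d, k' l x y) l := by
  refine hasDerivAt_parint (fun l x => ∫ y in c..d, k l x y) (fun l x => ∫ y in c..d, k' l x y)
    a b l (cont_parint2 k c d hk) (cont_parint2 k' c d hk') ?_
  intro l x
  exact hasDerivAt_parint (fun l y => k l x y) (fun l y => k' l x y) c d l
    (hk.comp (by fun_prop : Continuous fun q : ℝ × ℝ => (q.1, x, q.2)))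
    (hk'.comp (by fun_prop : Continuous fun q : ℝ × ℝ => (q.1, x, q.2))) (fun l y => h l x y)

theorem swap_parint (k : ℝ → ℝ → ℝ) {a b c d : ℝ} (hab : a ≤ b) (hcd : c ≤ d)
    (hk : Continuous (fun q : ℝ × ℝ => k q.1 q.2)) :
    (∫ x in a..b, ∫ y in c..d, k x y) = ∫ y in c..d, ∫ x in a..b, k x y := by
  simp only [intervalIntegral.integral_of_le hab, intervalIntegral.integral_of_le hcd]
  apply MeasureTheory.integral_integral_swap
  rw [Measure.prod_restrict]
  have : IntegrableOn (fun q : ℝ × ℝ => k q.1 q.2) (Set.Icc a b ×ˢ Set.Icc c d) :=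
    hk.continuousOn.integrableOn_compact (isCompact_Icc.prod isCompact_Icc)
  exact this.mono_set (Set.prod_mono Set.Ioc_subset_Icc_self Set.Ioc_subset_Icc_self)

/-! ### The representation formula -/

/-- The coordinate vectors: space-time is `ℝ × ℝ × ℝ` with coordinates `(t, x₁, x₂)`. -/
abbrev ve0 : ℝ × ℝ × ℝ := (1, 0, 0)
/-- See `ve0`. -/
abbrev ve1 : ℝ × ℝ × ℝ := (0, 1, 0)
/-- See `ve0`. -/
abbrev ve2 : ℝ × ℝ × ℝ := (0, 0, 1)

theorem dd_split (U : ℝ × ℝ × ℝ → ℝ) (a b c : ℝ) (p : ℝ × ℝ × ℝ) :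
    dd (a, b, c) U p = a * dd ve0 U p + b * dd ve1 U p + c * dd ve2 U p := by
  have : ((a, b, c) : ℝ × ℝ × ℝ) = a • ve0 + b • ve1 + c • ve2 := by simp
  unfold dd
  rw [this, map_add, map_add, map_smul, map_smul, map_smul]; simp only [smul_eq_mul]

/-- The wave equation in the open upper half space. -/
def WaveEq (U : ℝ × ℝ × ℝ → ℝ) : Prop :=
  ∀ p : ℝ × ℝ × ℝ, 0 < p.1 → dd ve0 (dd ve0 U) p = dd ve1 (dd ve1 U) p + dd ve2 (dd ve2 U) p

/-- Double integral over the half-sphere parameters, `γ` being the latitude. -/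
def hemi (k : ℝ → ℝ → ℝ) : ℝ := ∫ γ in (0:ℝ)..(π/2), ∫ β in (-π)..π, k γ β

/-- If `∂_l k` is a divergence `∂_γ A + ∂_β B` with `A` vanishing at both ends of the latitude
interval and `B` periodic in the longitude, then `hemi (k l)` does not depend on `l`. -/
theorem hemi_const (T : ℝ) (hT : 0 ≤ T) (k k' A A' B B' : ℝ → ℝ → ℝ → ℝ)
    (ck : Continuous fun q : ℝ × ℝ × ℝ => k q.1 q.2.1 q.2.2)
    (ck' : Continuous fun q : ℝ × ℝ × ℝ => k' q.1 q.2.1 q.2.2)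
    (cA' : Continuous fun q : ℝ × ℝ × ℝ => A' q.1 q.2.1 q.2.2)
    (cB' : Continuous fun q : ℝ × ℝ × ℝ => B' q.1 q.2.1 q.2.2)
    (hk : ∀ l γ β, HasDerivAt (fun l => k l γ β) (k' l γ β) l)
    (hA : ∀ l γ β, HasDerivAt (fun γ => A l γ β) (A' l γ β) γ)
    (hB : ∀ l γ β, HasDerivAt (fun β => B l γ β) (B' l γ β) β)
    (hsplit : ∀ l < T, ∀ γ β, k' l γ β = A' l γ β + B' l γ β)
    (hA0 : ∀ l β, A l (π / 2) β = A l 0 β) (hB0 : ∀ l γ, B l γ π = B l γ (-π)) :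
    hemi (k T) = hemi (k 0) := by
  have hπ2 : (0:ℝ) ≤ π / 2 := by positivity
  have hππ : -π ≤ π := by linarith [Real.pi_pos]
  have hzero : ∀ l < T, (∫ γ in (0:ℝ)..(π/2), ∫ β in (-π)..π, k' l γ β) = 0 := by
    intro l hl
    have cA'' : Continuous (fun q : ℝ × ℝ => A' l q.1 q.2) :=
      cA'.comp (by fun_prop : Continuous fun q : ℝ × ℝ => (l, q.1, q.2))
    have cB'' : Continuous (fun q : ℝ × ℝ => B' l q.1 q.2) :=
      cB'.comp (by fun_prop : Continuous fun q : ℝ × ℝ => (l, q.1, q.2))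
    have cA1 : ∀ γ, Continuous (fun β => A' l γ β) := fun γ =>
      cA''.comp (by fun_prop : Continuous fun q : ℝ => (γ, q))
    have cA2 : ∀ β, Continuous (fun γ => A' l γ β) := fun β =>
      cA''.comp (by fun_prop : Continuous fun q : ℝ => (q, β))
    have cB1 : ∀ γ, Continuous (fun β => B' l γ β) := fun γ =>
      cB''.comp (by fun_prop : Continuous fun q : ℝ => (γ, q))
    have hBz : ∀ γ, (∫ β in (-π)..π, B' l γ β) = 0 := by
      intro γ
      rw [intervalIntegral.integral_eq_sub_of_hasDerivAt (fun β _ => hB l γ β)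
        ((cB1 γ).intervalIntegrable _ _), hB0, sub_self]
    have hAz : ∀ β, (∫ γ in (0:ℝ)..(π/2), A' l γ β) = 0 := by
      intro β
      rw [intervalIntegral.integral_eq_sub_of_hasDerivAt (fun γ _ => hA l γ β)
        ((cA2 β).intervalIntegrable _ _), hA0, sub_self]
    have : ∀ γ, (∫ β in (-π)..π, k' l γ β) = ∫ β in (-π)..π, A' l γ β := by
      intro γ
      simp only [hsplit l hl]
      rw [intervalIntegral.integral_add ((cA1 γ).intervalIntegrable _ _)
        ((cB1 γ).intervalIntegrable _ _), hBz, add_zero]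
    simp only [this]
    rw [swap_parint _ hπ2 hππ cA'']
    simp [hAz]
  have hD := fun l => hasDerivAt_parint2 k k' 0 (π/2) (-π) π l ck ck' hk
  refine constant_of_derivWithin_zero (a := 0) (b := T)
      (f := fun l => ∫ γ in (0:ℝ)..(π/2), ∫ β in (-π)..π, k l γ β)
      (fun l _ => (hD l).differentiableAt.differentiableWithinAt) ?_ T ⟨hT, le_rfl⟩
  intro l hl
  rw [(hD l).differentiableAt.derivWithin
    (uniqueDiffOn_Icc (hl.1.trans_lt hl.2) l ⟨hl.1, hl.2.le⟩), (hD l).deriv, hzero l hl.2]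

/-- The integrand of the representation formula at `(t, r, 0)`, with `f` the initial position,
`(f1, f2)` its gradient and `g` the initial velocity. The point `(r - t cos γ cos β, t cos γ sin β)`
is the projection to the plane of a point of the half-sphere of radius `t` about `(r, 0, 0)`, and
`cos γ` is the Jacobian of the coordinates of the unit sphere. -/
def kir (f f1 f2 g : ℝ × ℝ → ℝ) (t r γ β : ℝ) : ℝ :=
  cos γ * (f (r - t * cos γ * cos β, t * cos γ * sin β)
    + t * cos γ * (-cos β * f1 (r - t * cos γ * cos β, t * cos γ * sin β)
        + sin β * f2 (r - t * cos γ * cos β, t * cos γ * sin β))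
    + t * g (r - t * cos γ * cos β, t * cos γ * sin β))

set_option maxHeartbeats 1600000 in
/-- Poisson's representation of a free wave by its Cauchy data. The corresponding integral with the
values of `U` at time `T - l` on the half-sphere of radius `l` does not depend on `l`: by the wave
equation its `l`-derivative is a divergence on the half-sphere. At `l = 0` it is `2π U(T, r, 0)`,
and at `l = T` it is the integral of the Cauchy data. -/
theorem rep_formula {U : ℝ × ℝ × ℝ → ℝ} (hU : ContDiff ℝ (⊤ : ℕ∞) U) (hw : WaveEq U)
    (T r : ℝ) (hT : 0 ≤ T) :
    2 * π * U (T, r, 0) = hemi (kir (fun p => U (0, p)) (fun p => dd ve1 U (0, p))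
      (fun p => dd ve2 U (0, p)) (fun p => dd ve0 U (0, p)) T r) := by
  have s0 := dd_smooth hU ve0
  have s1 := dd_smooth hU ve1
  have s2 := dd_smooth hU ve2
  have s00 := dd_smooth s0 ve0
  have s11 := dd_smooth s1 ve1
  have s12 := dd_smooth s2 ve1
  have s22 := dd_smooth s2 ve2
  have c := hU.continuous
  have c0 := s0.continuous
  have c1 := s1.continuous
  have c2 := s2.continuous
  have c00 := s00.continuous
  have c11 := s11.continuous
  have c12 := s12.continuous
  have c22 := s22.continuous
  have e10 : dd ve1 (dd ve0 U) = dd ve0 (dd ve1 U) := dd_comm hU _ _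
  have e20 : dd ve2 (dd ve0 U) = dd ve0 (dd ve2 U) := dd_comm hU _ _
  have e21 : dd ve2 (dd ve1 U) = dd ve1 (dd ve2 U) := dd_comm hU _ _
  set P : ℝ → ℝ → ℝ → ℝ × ℝ × ℝ := fun l γ β =>
    (T - l, r - l * cos γ * cos β, l * cos γ * sin β) with hP
  have cP : Continuous fun q : ℝ × ℝ × ℝ => P q.1 q.2.1 q.2.2 := by
    simp only [hP]; fun_prop
  -- derivative of the evaluation point in the three parameters
  have dPl : ∀ l γ β, HasDerivAt (fun l => P l γ β) (-1, -(cos γ * cos β), cos γ * sin β) l := by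
    intro l γ β
    refine HasDerivAt.prodMk (by simpa using (hasDerivAt_id l).const_sub T) (HasDerivAt.prodMk ?_ ?_)
    · have := (((hasDerivAt_id l).mul_const (cos γ)).mul_const (cos β)).const_sub r
      simpa using this
    · have := (((hasDerivAt_id l).mul_const (cos γ)).mul_const (sin β))
      simpa using this
  have dPγ : ∀ l γ β, HasDerivAt (fun γ => P l γ β)
      (0, l * sin γ * cos β, - (l * sin γ * sin β)) γ := by
    intro l γ β
    refine HasDerivAt.prodMk (hasDerivAt_const _ _) (HasDerivAt.prodMk ?_ ?_)
    · have := (((Real.hasDerivAt_cos γ).const_mul l).mul_const (cos β)).const_sub r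
      simpa using this
    · have := (((Real.hasDerivAt_cos γ).const_mul l).mul_const (sin β))
      simpa using this
  have dPβ : ∀ l γ β, HasDerivAt (fun β => P l γ β)
      (0, l * cos γ * sin β, l * cos γ * cos β) β := by
    intro l γ β
    refine HasDerivAt.prodMk (hasDerivAt_const _ _) (HasDerivAt.prodMk ?_ ?_)
    · have := ((Real.hasDerivAt_cos β).const_mul (l * cos γ)).const_sub r
      simpa using this
    · have := ((Real.hasDerivAt_sin β).const_mul (l * cos γ))
      simpa using this
  have DV : ∀ {V : ℝ × ℝ × ℝ → ℝ}, ContDiff ℝ (⊤ : ℕ∞) V → ∀ {cc : ℝ → ℝ × ℝ × ℝ} {a b c s : ℝ},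
      HasDerivAt cc (a, b, c) s →
      HasDerivAt (fun s => V (cc s)) (a * dd ve0 V (cc s) + b * dd ve1 V (cc s)
        + c * dd ve2 V (cc s)) s := by
    intro V hV cc a b c s h
    rw [← dd_split]; exact dd_curve hV h
  let k : ℝ → ℝ → ℝ → ℝ := fun l γ β => cos γ * (U (P l γ β)
    + l * cos γ * (-cos β * dd ve1 U (P l γ β) + sin β * dd ve2 U (P l γ β))
    + l * dd ve0 U (P l γ β))
  -- `EE` and `TT` are the second derivatives of `U` in the radial and the tangential direction of
  -- the plane, `N` and `Tg` the corresponding first derivatives.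
  let EE : ℝ → ℝ → ℝ → ℝ := fun l γ β => cos β ^ 2 * dd ve1 (dd ve1 U) (P l γ β)
    - 2 * sin β * cos β * dd ve1 (dd ve2 U) (P l γ β) + sin β ^ 2 * dd ve2 (dd ve2 U) (P l γ β)
  let TT : ℝ → ℝ → ℝ → ℝ := fun l γ β => sin β ^ 2 * dd ve1 (dd ve1 U) (P l γ β)
    + 2 * sin β * cos β * dd ve1 (dd ve2 U) (P l γ β) + cos β ^ 2 * dd ve2 (dd ve2 U) (P l γ β)
  let N : ℝ → ℝ → ℝ → ℝ := fun l γ β =>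
    -cos β * dd ve1 U (P l γ β) + sin β * dd ve2 U (P l γ β)
  let Tg : ℝ → ℝ → ℝ → ℝ := fun l γ β =>
    sin β * dd ve1 U (P l γ β) + cos β * dd ve2 U (P l γ β)
  let k' : ℝ → ℝ → ℝ → ℝ := fun l γ β => cos γ * (2 * cos γ * N l γ β
    + l * (cos γ ^ 2 * EE l γ β - dd ve0 (dd ve0 U) (P l γ β)))
  -- The divergence: `A'` is `∂_γ (sin γ cos γ N)` and `B'` is `∂_β (-Tg)`.
  let A' : ℝ → ℝ → ℝ → ℝ := fun l γ β =>
    (cos γ ^ 2 - sin γ ^ 2) * N l γ β - l * sin γ ^ 2 * cos γ * EE l γ β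
  let B' : ℝ → ℝ → ℝ → ℝ := fun l γ β => N l γ β - l * cos γ * TT l γ β
  have ck : Continuous fun q : ℝ × ℝ × ℝ => k q.1 q.2.1 q.2.2 := by simp only [k]; fun_prop
  have cN : Continuous fun q : ℝ × ℝ × ℝ => N q.1 q.2.1 q.2.2 := by simp only [N]; fun_prop
  have cEE : Continuous fun q : ℝ × ℝ × ℝ => EE q.1 q.2.1 q.2.2 := by simp only [EE]; fun_prop
  have cTT : Continuous fun q : ℝ × ℝ × ℝ => TT q.1 q.2.1 q.2.2 := by simp only [TT]; fun_prop
  have ck' : Continuous fun q : ℝ × ℝ × ℝ => k' q.1 q.2.1 q.2.2 := by simp only [k']; fun_prop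
  have cA' : Continuous fun q : ℝ × ℝ × ℝ => A' q.1 q.2.1 q.2.2 := by simp only [A']; fun_prop
  have cB' : Continuous fun q : ℝ × ℝ × ℝ => B' q.1 q.2.1 q.2.2 := by simp only [B']; fun_prop
  have hk : ∀ l γ β, HasDerivAt (fun l => k l γ β) (k' l γ β) l := by
    intro l γ β
    have h := ((DV hU (dPl l γ β)).add ((((hasDerivAt_id l).mul_const (cos γ))).mul
      (((DV s1 (dPl l γ β)).const_mul (-cos β)).add ((DV s2 (dPl l γ β)).const_mul (sin β))))).add
      ((hasDerivAt_id l).mul (DV s0 (dPl l γ β)))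
    have h' : HasDerivAt (fun l => k l γ β) _ l := h.const_mul (cos γ)
    refine h'.congr_deriv ?_
    simp only [k', N, EE, e10, e20, e21, id, Pi.add_apply]
    ring
  have hA : ∀ l γ β, HasDerivAt (fun γ => sin γ * cos γ * N l γ β) (A' l γ β) γ := by
    intro l γ β
    have h := ((Real.hasDerivAt_sin γ).mul (Real.hasDerivAt_cos γ)).mul
      (((DV s1 (dPγ l γ β)).const_mul (-cos β)).add ((DV s2 (dPγ l γ β)).const_mul (sin β)))
    have h' : HasDerivAt (fun γ => sin γ * cos γ * N l γ β) _ γ := h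
    refine h'.congr_deriv ?_
    simp only [A', N, EE, e21, Pi.add_apply, Pi.mul_apply]
    ring
  have hB : ∀ l γ β, HasDerivAt (fun β => -Tg l γ β) (B' l γ β) β := by
    intro l γ β
    have h := (((Real.hasDerivAt_sin β).mul (DV s1 (dPβ l γ β))).add
      ((Real.hasDerivAt_cos β).mul (DV s2 (dPβ l γ β)))).neg
    have h' : HasDerivAt (fun β => -Tg l γ β) _ β := h
    refine h'.congr_deriv ?_
    simp only [B', N, TT, e21]
    ring
  have hsplit : ∀ l < T, ∀ γ β, k' l γ β = A' l γ β + B' l γ β := by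
    intro l hl γ β
    -- the wave equation is available since the time `T - l` is positive
    have h := hw (P l γ β) (by simp [hP]; exact hl)
    simp only [k', A', B', h, N, EE, TT]
    rw [Real.sin_sq γ, Real.sin_sq β]; ring
  have hconst := hemi_const T hT k k' (fun l γ β => sin γ * cos γ * N l γ β) A'
    (fun l γ β => -Tg l γ β) B' ck ck' cA' cB' hk hA hB hsplit
    (by intro l β; simp) (by intro l γ; simp [Tg, hP])
  have h0 : hemi (k 0) = 2 * π * U (T, r, 0) := by
    simp only [hemi, k, hP]; simp; left; ring
  rw [← h0, ← hconst]
  simp [hemi, kir, k, hP]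

/-! ### The Radon and Abel transforms -/

/-- Vanishing outside the closed Euclidean disc of radius `R`. -/
def Supp (R : ℝ) (h : ℝ × ℝ → ℝ) : Prop := ∀ p : ℝ × ℝ, R ^ 2 < p.1 ^ 2 + p.2 ^ 2 → h p = 0

theorem Supp.left {R : ℝ} {h : ℝ × ℝ → ℝ} (hs : Supp R h) {a b : ℝ} (ha : R < |a|) (hR : 0 ≤ R) :
    h (a, b) = 0 := by
  apply hs
  have := sq_abs a
  simp only
  nlinarith [sq_nonneg b]

theorem Supp.right {R : ℝ} {h : ℝ × ℝ → ℝ} (hs : Supp R h) {a b : ℝ} (hb : R < |b|) (hR : 0 ≤ R) :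
    h (a, b) = 0 := by
  apply hs
  have := sq_abs b
  simp only
  nlinarith [sq_nonneg a]

theorem integral_eq_interval {F : ℝ → ℝ} {M : ℝ} (hM : 0 ≤ M) (h : ∀ x, M < |x| → F x = 0) :
    ∫ x, F x = ∫ x in (-M)..M, F x := by
  rw [intervalIntegral.integral_of_le (by linarith), ← integral_Icc_eq_integral_Ioc]
  symm
  apply setIntegral_eq_integral_of_forall_compl_eq_zero
  intro x hx
  apply h
  by_contra hc
  exact hx (Set.mem_Icc.2 (abs_le.1 (not_lt.1 hc)))

/-- In the direction `(1, 0)` the lines are vertical. -/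
theorem Rline_eq {h : ℝ × ℝ → ℝ} {R M : ℝ} (hR : 0 ≤ R) (hM : R ≤ M) (hs : Supp R h) (s : ℝ) :
    Rline (fun a b => h (a, b)) s 1 0 = ∫ τ in (-M)..M, h (s, τ) := by
  unfold Rline
  rw [← integral_eq_interval (hR.trans hM)]
  · simp
  · intro x hx; exact hs.right (lt_of_le_of_lt hM hx) hR

/-- The substitution `s = σ + v²` removes the singularity of the Abel kernel. -/
theorem R2_eq {h : ℝ × ℝ → ℝ} {R M V σ : ℝ} (hR : 0 ≤ R) (hM : R ≤ M) (hs : Supp R h)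
    (hV : 0 ≤ V) (hV2 : R - σ ≤ V ^ 2) :
    R2 (fun a b => h (a, b)) σ 1 0 =
      (1 / (√2 * π)) * ∫ v in (0:ℝ)..V, ∫ τ in (-M)..M, h (σ + v ^ 2, τ) := by
  unfold R2
  simp only [Rline_eq hR hM hs]
  have e1 : (∫ s in Set.Ioi σ, (∫ τ in (-M)..M, h (s, τ)) / √(s - σ)) =
      ∫ u in Set.Ioi (0:ℝ), (∫ τ in (-M)..M, h (σ + u, τ)) / √u := by
    have := (measurePreserving_add_left volume σ).setIntegral_preimage_emb
      (measurableEmbedding_addLeft σ) (fun s => (∫ τ in (-M)..M, h (s, τ)) / √(s - σ)) (Set.Ioi σ)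
    rw [← this]
    simp
  have e2 := integral_comp_rpow_Ioi_of_pos (g := fun u => (∫ τ in (-M)..M, h (σ + u, τ)) / √u)
    (p := 2) two_pos
  rw [e1, ← e2]
  have e3 : (∫ x in Set.Ioi (0:ℝ), ((2:ℝ) * x ^ ((2:ℝ) - 1)) •
      ((∫ τ in (-M)..M, h (σ + x ^ (2:ℝ), τ)) / √(x ^ (2:ℝ)))) =
      ∫ x in Set.Ioi (0:ℝ), 2 * ∫ τ in (-M)..M, h (σ + x ^ 2, τ) := by
    refine setIntegral_congr_fun measurableSet_Ioi ?_
    intro x hx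
    have hx : 0 < x := hx
    have h1 : x ^ ((2:ℝ) - 1) = x := by norm_num
    have h2 : x ^ (2:ℝ) = x ^ 2 := by norm_cast
    simp only [h1, h2, Real.sqrt_sq hx.le, smul_eq_mul]
    field_simp
  rw [e3, intervalIntegral.integral_of_le hV]
  have e4 : (∫ x in Set.Ioi (0:ℝ), 2 * ∫ τ in (-M)..M, h (σ + x ^ 2, τ)) =
      ∫ x in Set.Ioc (0:ℝ) V, 2 * ∫ τ in (-M)..M, h (σ + x ^ 2, τ) := by
    apply setIntegral_eq_of_subset_of_forall_sdiff_eq_zero measurableSet_Ioi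
      Set.Ioc_subset_Ioi_self
    intro x hx
    have hx0 : 0 < x := hx.1
    have hxV : V < x := by
      by_contra hc; exact hx.2 ⟨hx0, not_lt.1 hc⟩
    have : ∀ τ, h (σ + x ^ 2, τ) = 0 := by
      intro τ
      apply hs.left _ hR
      rw [lt_abs]; left; nlinarith
    simp [this]
  rw [e4, integral_const_mul, ← mul_assoc]
  congr 1
  field_simp

theorem Supp.dd {R : ℝ} {h : ℝ × ℝ → ℝ} (hs : Supp R h) (v : ℝ × ℝ) : Supp R (dd v h) := by
  intro p hp
  have ho : IsOpen {p : ℝ × ℝ | R ^ 2 < p.1 ^ 2 + p.2 ^ 2} :=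
    isOpen_lt (by fun_prop) (by fun_prop)
  have := dd_congr ho (V := fun _ => 0) (fun q hq => hs q hq) v p hp
  rw [this]; simp [_root_.dd]

/-- In the direction `(1, 0)` the `σ`-derivative of `R2` falls on the function as `∂₁`. -/
theorem R2_hasDerivAt {ψ : ℝ × ℝ → ℝ} {R : ℝ} (hR : 0 ≤ R) (hs : Supp R ψ)
    (hψ : ContDiff ℝ (⊤ : ℕ∞) ψ) (σ : ℝ) :
    HasDerivAt (fun σ => R2 (fun a b => ψ (a, b)) σ 1 0)
      (R2 (fun a b => dd (1, 0) ψ (a, b)) σ 1 0) σ := by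
  set V := R + |σ| + 1 with hV
  have hV1 : 1 ≤ V := by have := abs_nonneg σ; linarith
  have key : ∀ y, |y - σ| < 1 → R - y ≤ V ^ 2 := by
    intro y hy
    have h1 := abs_lt.1 hy
    have h2 := neg_abs_le σ
    nlinarith
  have e : (fun σ => R2 (fun a b => ψ (a, b)) σ 1 0) =ᶠ[𝓝 σ] fun σ =>
      (1 / (√2 * π)) * ∫ v in (0:ℝ)..V, ∫ τ in (-R)..R, ψ (σ + v ^ 2, τ) := by
    filter_upwards [Metric.ball_mem_nhds σ one_pos] with y hy
    exact R2_eq hR le_rfl hs (by linarith) (key y (by simpa [Real.dist_eq] using hy))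
  refine HasDerivAt.congr_of_eventuallyEq ?_ e
  rw [R2_eq hR le_rfl (hs.dd _) (by linarith) (key σ (by simp))]
  refine HasDerivAt.const_mul _ ?_
  have c1 := hψ.continuous
  have c2 := (dd_smooth hψ (1, 0)).continuous
  refine hasDerivAt_parint2 (fun σ v τ => ψ (σ + v ^ 2, τ))
    (fun σ v τ => dd (1, 0) ψ (σ + v ^ 2, τ)) _ _ _ _ σ (by fun_prop) (by fun_prop) ?_
  intro l x y
  exact dd_curve hψ (c := fun l => (l + x ^ 2, y))
    (((hasDerivAt_id l).add_const (x ^ 2)).prodMk (hasDerivAt_const l y))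

/-- In the direction `(1, 0)` the derivative `∂₂` is tangential to the lines of integration. -/
theorem R2_d2 {ψ : ℝ × ℝ → ℝ} {R : ℝ} (hR : 0 ≤ R) (hs : Supp R ψ)
    (hψ : ContDiff ℝ (⊤ : ℕ∞) ψ) (σ : ℝ) :
    R2 (fun a b => dd (0, 1) ψ (a, b)) σ 1 0 = 0 := by
  have hV : R - σ ≤ (R + |σ| + 1) ^ 2 := by
    have := neg_abs_le σ
    nlinarith [abs_nonneg σ]
  rw [R2_eq (M := R + 1) hR (by linarith) (hs.dd _) (by positivity) hV]
  have : ∀ v : ℝ, (∫ τ in (-(R + 1))..(R + 1), dd (0, 1) ψ (σ + v ^ 2, τ)) = 0 := by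
    intro v
    have c2 := (dd_smooth hψ (0, 1)).continuous
    have hd : ∀ τ, HasDerivAt (fun τ => ψ (σ + v ^ 2, τ)) (dd (0, 1) ψ (σ + v ^ 2, τ)) τ := by
      intro τ
      exact dd_curve hψ (c := fun τ => (σ + v ^ 2, τ))
        ((hasDerivAt_const τ (σ + v ^ 2)).prodMk (hasDerivAt_id τ))
    rw [intervalIntegral.integral_eq_sub_of_hasDerivAt (fun τ _ => hd τ)
      (Continuous.intervalIntegrable (by fun_prop) _ _),
      hs.right (by rw [abs_of_nonneg] <;> linarith) hR,
      hs.right (by rw [abs_neg, abs_of_nonneg] <;> linarith) hR, sub_self]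
  simp only [this]; simp

theorem R2_lin {h k : ℝ × ℝ → ℝ} {R : ℝ} (hR : 0 ≤ R) (hs : Supp R h) (ks : Supp R k)
    (hc : Continuous h) (kc : Continuous k) (a b σ : ℝ) :
    R2 (fun x y => a * h (x, y) + b * k (x, y)) σ 1 0 =
      a * R2 (fun x y => h (x, y)) σ 1 0 + b * R2 (fun x y => k (x, y)) σ 1 0 := by
  have hV : R - σ ≤ (R + |σ| + 1) ^ 2 := by
    have := neg_abs_le σ
    nlinarith [abs_nonneg σ]
  have hsk : Supp R (fun p => a * h p + b * k p) := by
    intro p hp; simp [hs p hp, ks p hp]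
  rw [R2_eq hR le_rfl hs (by positivity) hV, R2_eq hR le_rfl ks (by positivity) hV,
    R2_eq (h := fun p => a * h p + b * k p) hR le_rfl hsk (by positivity) hV]
  have e : ∀ v : ℝ, (∫ τ in (-R)..R, a * h (σ + v ^ 2, τ) + b * k (σ + v ^ 2, τ)) =
      a * (∫ τ in (-R)..R, h (σ + v ^ 2, τ)) + b * ∫ τ in (-R)..R, k (σ + v ^ 2, τ) := by
    intro v
    rw [intervalIntegral.integral_add (Continuous.intervalIntegrable (by fun_prop) _ _)
      (Continuous.intervalIntegrable (by fun_prop) _ _)]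
    simp
  simp only [e]
  have ch : Continuous fun v : ℝ => ∫ τ in (-R)..R, h (σ + v ^ 2, τ) :=
    cont_parint (fun v τ => h (σ + v ^ 2, τ)) _ _ (by fun_prop)
  have ck : Continuous fun v : ℝ => ∫ τ in (-R)..R, k (σ + v ^ 2, τ) :=
    cont_parint (fun v τ => k (σ + v ^ 2, τ)) _ _ (by fun_prop)
  rw [intervalIntegral.integral_add (Continuous.intervalIntegrable (by fun_prop) _ _)
      (Continuous.intervalIntegrable (by fun_prop) _ _)]
  simp only [intervalIntegral.integral_const_mul]
  ring

/-- The square circumscribed to the disc of radius `R`. -/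
def box (R : ℝ) : Set (ℝ × ℝ) := Set.Icc (-R) R ×ˢ Set.Icc (-R) R

theorem box_eq {F : ℝ × ℝ → ℝ} {R : ℝ} (hR : 0 ≤ R) (hF : ContinuousOn F (box R)) :
    ∫ y in box R, F y = ∫ a in (-R)..R, ∫ b in (-R)..R, F (a, b) := by
  have hi : IntegrableOn F (box R) := hF.integrableOn_compact (isCompact_Icc.prod isCompact_Icc)
  rw [box, Measure.volume_eq_prod, setIntegral_prod _ hi]
  simp only [intervalIntegral.integral_of_le (show -R ≤ R by linarith),
    integral_Icc_eq_integral_Ioc]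

/-- Away from the singularity the radiation transform is a plain planar integral. -/
theorem R2_box {h : ℝ × ℝ → ℝ} {R s : ℝ} (hR : 0 < R) (hs : Supp R h) (hc : Continuous h)
    (hsR : 2 * R ≤ s) :
    R2 (fun a b => h (a, b)) (-s) 1 0 =
      (1 / (2 * √2 * π)) * ∫ y in box R, h y / √(s + y.1) := by
  unfold R2
  congr 1
  simp only [Rline_eq hR.le le_rfl hs]
  rw [box_eq hR.le, intervalIntegral.integral_of_le (show -R ≤ R by linarith),
    ← integral_Icc_eq_integral_Ioc]
  · rw [eq_comm, setIntegral_congr_fun measurableSet_Icc (g := fun s' =>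
      (∫ τ in (-R)..R, h (s', τ)) / √(s' - -s))]
    · symm
      apply setIntegral_eq_of_subset_of_forall_sdiff_eq_zero measurableSet_Ioi
      · intro x hx; have := hx.1; simp only [Set.mem_Ioi]; linarith
      · intro x hx
        have : ∀ τ, h (x, τ) = 0 := by
          intro τ
          apply hs.left _ hR.le
          by_contra hcc
          exact hx.2 (Set.mem_Icc.2 (abs_le.1 (not_lt.1 hcc)))
        simp [this]
    · intro x hx
      simp [add_comm]
  · refine ContinuousOn.div hc.continuousOn (by fun_prop) ?_
    intro y hy
    have : -R ≤ y.1 := hy.1.1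
    exact (Real.sqrt_pos.2 (by linarith)).ne'

/-! ### Cauchy data and the kernel near the light cone -/

/-- The hypotheses on Cauchy data needed for the asymptotics: support in the disc of radius `R`,
bounds and Lipschitz bounds by `K`, and vanishing means. The functions `f1`, `f2` are to be thought
of as the gradient of `f`, and `g` as the initial velocity. -/
structure Dat (R K : ℝ) (f f1 f2 g : ℝ × ℝ → ℝ) : Prop where
  hR : 1 ≤ R
  hK : 0 ≤ K
  cf : Continuous f
  cf1 : Continuous f1
  cf2 : Continuous f2
  cg : Continuous g
  sf : Supp R f
  sf1 : Supp R f1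
  sf2 : Supp R f2
  sg : Supp R g
  bf : ∀ p, |f p| ≤ K
  bf1 : ∀ p, |f1 p| ≤ K
  bf2 : ∀ p, |f2 p| ≤ K
  bg : ∀ p, |g p| ≤ K
  lf1 : ∀ a b c d, |f1 (a, b) - f1 (c, d)| ≤ K * (|a - c| + |b - d|)
  lg : ∀ a b c d, |g (a, b) - g (c, d)| ≤ K * (|a - c| + |b - d|)
  if1 : ∫ y in box R, f1 y = 0
  ig : ∫ y in box R, g y = 0

/-- The solution at `(t, r, 0)` expressed through its Cauchy data. -/
def Jf (f f1 f2 g : ℝ × ℝ → ℝ) (t r : ℝ) : ℝ := (1 / (2 * π)) * hemi (kir f f1 f2 g t r)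

/-- The bracket in `kir`, divided by `t`. Without the factor `t cos γ` of `kir` it has a limit as
`t → ∞` near the light cone. -/
def Nf (f f1 f2 g : ℝ × ℝ → ℝ) (t r γ β : ℝ) : ℝ :=
  f (r - t * cos γ * cos β, t * cos γ * sin β) / t +
    cos γ * (-cos β * f1 (r - t * cos γ * cos β, t * cos γ * sin β) +
      sin β * f2 (r - t * cos γ * cos β, t * cos γ * sin β)) +
    g (r - t * cos γ * cos β, t * cos γ * sin β)

section
variable {R K : ℝ} {f f1 f2 g : ℝ × ℝ → ℝ}

theorem kir_eq_Nf {t : ℝ} (ht : 0 < t) (r γ β : ℝ) :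
    kir f f1 f2 g t r γ β = t * cos γ * Nf f f1 f2 g t r γ β := by
  unfold kir Nf
  field_simp

theorem Dat.Nf_cont (D : Dat R K f f1 f2 g) (t r : ℝ) :
    Continuous (fun q : ℝ × ℝ => Nf f f1 f2 g t r q.1 q.2) := by
  have := D.cf; have := D.cf1; have := D.cf2; have := D.cg
  unfold Nf
  fun_prop

theorem Dat.Nf_zero (D : Dat R K f f1 f2 g) {t r γ β : ℝ}
    (h : R ^ 2 < (r - t * cos γ * cos β) ^ 2 + (t * cos γ * sin β) ^ 2) :
    Nf f f1 f2 g t r γ β = 0 := by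
  simp [Nf, D.sf (r - t * cos γ * cos β, t * cos γ * sin β) h,
    D.sf1 (r - t * cos γ * cos β, t * cos γ * sin β) h,
    D.sf2 (r - t * cos γ * cos β, t * cos γ * sin β) h,
    D.sg (r - t * cos γ * cos β, t * cos γ * sin β) h]

/-- Discarding the parts of an interval on which the integrand vanishes. -/
theorem shrink {F : ℝ → ℝ} {a a' b' b : ℝ} (h1 : a ≤ a') (h2 : a' ≤ b') (h3 : b' ≤ b)
    (h : ∀ x, a ≤ x → x ≤ b → (x < a' ∨ b' < x) → F x = 0) :
    ∫ x in a..b, F x = ∫ x in a'..b', F x := by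
  rw [intervalIntegral.integral_of_le (by linarith), intervalIntegral.integral_of_le h2,
    ← integral_Icc_eq_integral_Ioc, ← integral_Icc_eq_integral_Ioc]
  apply setIntegral_eq_of_subset_of_forall_sdiff_eq_zero measurableSet_Icc
    (Set.Icc_subset_Icc h1 h3)
  intro x hx
  apply h x hx.1.1 hx.1.2
  by_contra hc
  push Not at hc
  exact hx.2 ⟨hc.1, hc.2⟩

/-- The longitude integral, written in the arc-length variable `τ = ρβ`. Only the arc of length
comparable to the diameter of the support contributes. -/
theorem Dat.inner (D : Dat R K f f1 f2 g) {t r γ : ℝ} (ht : 0 < t) (hr : R < r)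
    (hρ : 2 * R ≤ π * (t * cos γ)) :
    ∫ β in (-π)..π, kir f f1 f2 g t r γ β =
      ∫ τ in (-(2 * R))..(2 * R), Nf f f1 f2 g t r γ (τ / (t * cos γ)) := by
  have hR := D.hR
  have hρ0 : 0 < t * cos γ := by
    by_contra hc
    nlinarith [Real.pi_pos]
  set ρ := t * cos γ with hρd
  have h1 : ∫ β in (-π)..π, kir f f1 f2 g t r γ β =
      ∫ τ in (-(π * ρ))..(π * ρ), Nf f f1 f2 g t r γ (τ / ρ) := by
    rw [intervalIntegral.integral_comp_div (fun β => Nf f f1 f2 g t r γ β) hρ0.ne',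
      neg_div, mul_div_cancel_right₀ _ hρ0.ne']
    simp only [kir_eq_Nf ht, intervalIntegral.integral_const_mul, smul_eq_mul, hρd]
  rw [h1]
  apply shrink (by linarith) (by linarith) hρ
  intro τ ha hb hτ
  have hτ2 : 2 * R < |τ| := by
    rcases hτ with h | h
    · rw [lt_abs]; right; linarith
    · exact lt_of_lt_of_le h (le_abs_self _)
  apply D.Nf_zero
  by_contra hc
  push Not at hc
  rw [← hρd] at hc
  have hβπ : |τ / ρ| ≤ π := by
    rw [abs_div, abs_of_pos hρ0, div_le_iff₀ hρ0, abs_le]; constructor <;> linarith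
  have hcos : 0 < cos (τ / ρ) := by
    have h2 : r - ρ * cos (τ / ρ) ≤ R := by
      apply abs_le_of_sq_le_sq' _ (by linarith) |>.2
      nlinarith [sq_nonneg (ρ * sin (τ / ρ))]
    have h3 : 0 < ρ * cos (τ / ρ) := by linarith
    exact pos_of_mul_pos_right h3 hρ0.le
  have hβ2 : |τ / ρ| ≤ π / 2 := by
    by_contra h
    push Not at h
    have := Real.cos_nonpos_of_pi_div_two_le_of_le h.le (by linarith [Real.pi_pos])
    rw [Real.cos_abs] at this
    linarith
  have h4 := Real.mul_abs_le_abs_sin hβ2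
  have h5 : |ρ * sin (τ / ρ)| ≤ R := by
    apply abs_le_of_sq_le_sq _ (by linarith)
    nlinarith [sq_nonneg (r - ρ * cos (τ / ρ))]
  rw [abs_mul, abs_of_pos hρ0] at h5
  have h6 : ρ * (2 / π * |τ / ρ|) ≤ R := le_trans (by gcongr) h5
  rw [abs_div, abs_of_pos hρ0] at h6
  have h7 : ρ * (2 / π * (|τ| / ρ)) = 2 * |τ| / π := by field_simp
  rw [h7, div_le_iff₀ Real.pi_pos] at h6
  nlinarith [Real.pi_lt_four]

theorem abs_sin_sub_le_sq {β : ℝ} (hβ1 : |β| ≤ 1) : |sin β - β| ≤ β ^ 2 := by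
  have h := Real.sin_bound hβ1
  have h3 : |β ^ 3| ≤ β ^ 2 := by
    rw [abs_pow, ← sq_abs β]; exact pow_le_pow_of_le_one (abs_nonneg _) hβ1 (by norm_num)
  have h5 : |β| ^ 5 ≤ β ^ 2 := by
    rw [← sq_abs β]; exact pow_le_pow_of_le_one (abs_nonneg _) hβ1 (by norm_num)
  have h2 := sq_nonneg β
  rw [abs_le] at h h3 ⊢
  constructor <;> linarith [h.1, h.2, h3.1, h3.2]

/-- Near the light cone, with the latitude rescaled by `√(2/t)` and the longitude by `1/ρ`, the
spherical parametrisation differs from the parabolic one by `O(1/t)`. -/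
theorem near_geom {R t r δ v τ : ℝ} (hR : 1 ≤ R) (ht : 100 * R ^ 2 ≤ t)
    (hδ : δ ^ 2 = 2 / t) (hv0 : 0 ≤ v) (hv : v ≤ 3 * R) (hτ : |τ| ≤ 2 * R)
    {γ β ρ : ℝ} (hγ : γ = δ * v) (hρ : ρ = t * cos γ) (hβ : β = τ / ρ) :
    t / 2 ≤ ρ ∧ |(r - ρ * cos β) - (r - t + v ^ 2)| ≤ 21 * (R ^ 4 / t) ∧
      |ρ * sin β - τ| ≤ 8 * (R ^ 4 / t) ∧ |1 - cos γ * cos β| ≤ 13 * (R ^ 4 / t) ∧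
      |sin β| ≤ 4 * (R ^ 4 / t) ∧ 1 / t ≤ R ^ 4 / t := by
  have ht0 : 0 < t := by nlinarith
  have hR2 : 1 ≤ R ^ 2 := by nlinarith
  have hR24 : R ^ 2 ≤ R ^ 4 := by nlinarith
  have hR4 : 1 ≤ R ^ 4 := by linarith
  have hR14 : R ≤ R ^ 4 := by nlinarith
  have hv2 : v ^ 2 ≤ 9 * R ^ 2 := by nlinarith
  have hv4 : v ^ 4 ≤ 81 * R ^ 4 := by
    have : (v ^ 2) ^ 2 ≤ (9 * R ^ 2) ^ 2 := by gcongr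
    nlinarith
  have hτ2 : τ ^ 2 ≤ 4 * R ^ 2 := by
    have := sq_le_sq' (by linarith [abs_nonneg τ]) hτ
    rw [sq_abs] at this; nlinarith
  have hγ2 : γ ^ 2 = 2 * v ^ 2 / t := by rw [hγ, mul_pow, hδ]; ring
  have hγs : γ ^ 2 ≤ 18 / 100 := by
    rw [hγ2, div_le_iff₀ ht0]; nlinarith
  have hγ1 : |γ| ≤ 1 := by
    apply abs_le_of_sq_le_sq _ zero_le_one
    linarith
  have hcb := Real.cos_bound hγ1
  have hγ4 : |γ| ^ 4 = 4 * v ^ 4 / t ^ 2 := by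
    have : |γ| ^ 4 = (γ ^ 2) ^ 2 := by rw [← sq_abs γ]; ring
    rw [this, hγ2]; ring
  have hc1 := Real.one_sub_sq_div_two_le_cos (x := γ)
  have hc2 := Real.cos_le_one γ
  have hρt : t / 2 ≤ ρ := by rw [hρ]; nlinarith
  have hρt' : ρ ≤ t := by rw [hρ]; nlinarith
  have hρ0 : 0 < ρ := by linarith
  have e1 : |t - ρ - v ^ 2| ≤ 17 * (R ^ 4 / t) := by
    have : t - ρ - v ^ 2 = -(t * (cos γ - (1 - γ ^ 2 / 2))) := by
      rw [hρ, hγ2]; field_simp; ring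
    rw [this, abs_neg, abs_mul, abs_of_pos ht0]
    calc t * |cos γ - (1 - γ ^ 2 / 2)| ≤ t * (|γ| ^ 4 * (5 / 96)) := by gcongr
      _ = v ^ 4 * (20 / 96) / t := by rw [hγ4]; field_simp; ring
      _ ≤ (81 * R ^ 4) * (20 / 96) / t := by gcongr
      _ ≤ _ := by
        rw [mul_div_assoc' 17, div_le_div_iff_of_pos_right ht0]; linarith
  have hρβ : ρ * β = τ := by rw [hβ]; field_simp
  have hβa : |β| ≤ 4 * R / t := by
    rw [hβ, abs_div, abs_of_pos hρ0, div_le_div_iff₀ hρ0 ht0]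
    nlinarith
  have hβ1 : |β| ≤ 1 := hβa.trans (by rw [div_le_one ht0]; nlinarith)
  have hρβ2 : ρ * β ^ 2 ≤ 8 * (R ^ 2 / t) := by
    have : ρ * β ^ 2 = τ ^ 2 / ρ := by rw [hβ]; field_simp
    rw [this, div_le_iff₀ hρ0]
    have : 8 * (R ^ 2 / t) * (t / 2) ≤ 8 * (R ^ 2 / t) * ρ := by gcongr
    have h2 : 8 * (R ^ 2 / t) * (t / 2) = 4 * R ^ 2 := by field_simp; norm_num
    linarith
  have hb1 := Real.one_sub_sq_div_two_le_cos (x := β)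
  have hb2 := Real.cos_le_one β
  have hsb := abs_sin_sub_le_sq hβ1
  have hX0 : 0 ≤ R ^ 4 / t := by positivity
  have hX2 : R ^ 2 / t ≤ R ^ 4 / t := by gcongr
  have hX1 : R / t ≤ R ^ 4 / t := by gcongr
  have hXo : 1 / t ≤ R ^ 4 / t := by gcongr
  set X := R ^ 4 / t with hX
  have eP1 : |(r - ρ * cos β) - (r - t + v ^ 2)| ≤ 21 * X := by
    have h1 : ρ * (1 - cos β) ≤ ρ * (β ^ 2 / 2) := by gcongr; linarith
    have h0 : 0 ≤ ρ * (1 - cos β) := mul_nonneg hρ0.le (by linarith)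
    have h2 : ρ * (β ^ 2 / 2) ≤ 4 * X := by linarith
    rw [abs_le] at e1 ⊢
    constructor <;> linarith [e1.1, e1.2]
  have eP2 : |ρ * sin β - τ| ≤ 8 * X := by
    rw [← hρβ, ← mul_sub, abs_mul, abs_of_pos hρ0]
    have := mul_le_mul_of_nonneg_left hsb hρ0.le
    linarith
  have hγX : 1 - cos γ ≤ 9 * X := by
    have : γ ^ 2 / 2 ≤ 9 * (R ^ 2 / t) := by
      rw [hγ2]
      have : 2 * v ^ 2 / t / 2 = v ^ 2 / t := by ring
      rw [this, mul_div_assoc', div_le_div_iff_of_pos_right ht0]; exact hv2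
    linarith
  have hβX : 1 - cos β ≤ 4 * X := by
    have : β ^ 2 ≤ |β| := by
      rw [← sq_abs]; exact pow_le_of_le_one (abs_nonneg _) hβ1 two_ne_zero
    have h4 : |β| ≤ 4 * (R / t) := by rw [mul_div_assoc']; exact hβa
    linarith [abs_nonneg β]
  have hsX : |sin β| ≤ 4 * X := by
    have h4 : |β| ≤ 4 * (R / t) := by rw [mul_div_assoc']; exact hβa
    exact Real.abs_sin_le_abs.trans (by linarith)
  have hcc : |1 - cos γ * cos β| ≤ 13 * X := by
    have hcγ : 0 ≤ cos γ := by linarith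
    have h1 : 0 ≤ cos γ * (1 - cos β) := mul_nonneg hcγ (by linarith)
    have h2 : cos γ * (1 - cos β) ≤ 1 * (1 - cos β) :=
      mul_le_mul_of_nonneg_right hc2 (by linarith)
    rw [abs_le]; constructor <;> linarith
  exact ⟨hρt, eP1, eP2, hcc, hsX, hXo⟩

/-- Comparison of the kernel near the light cone with its limit: after rescaling the latitude by
`√(2/t)` and the longitude by `1/ρ` all errors are `O(1/t)`. -/
theorem Dat.near_point (D : Dat R K f f1 f2 g) {t r δ v τ : ℝ} (ht : 100 * R ^ 2 ≤ t)
    (hδ : δ ^ 2 = 2 / t) (hv0 : 0 ≤ v) (hv : v ≤ 3 * R) (hτ : |τ| ≤ 2 * R) :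
    |Nf f f1 f2 g t r (δ * v) (τ / (t * cos (δ * v))) -
      (g (r - t + v ^ 2, τ) - f1 (r - t + v ^ 2, τ))| ≤ 80 * K * R ^ 4 / t ∧
    2 * R ≤ π * (t * cos (δ * v)) := by
  have hR := D.hR
  have hK := D.hK
  have ht0 : 0 < t := by nlinarith
  set γ := δ * v with hγ
  set ρ := t * cos γ with hρ
  set β := τ / ρ with hβ
  obtain ⟨hρt, eP1, eP2, hcc, hsX, hXo⟩ := near_geom (r := r) hR ht hδ hv0 hv hτ hγ hρ hβ
  have hX0 : 0 ≤ R ^ 4 / t := by positivity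
  set X := R ^ 4 / t with hX
  refine ⟨?_, by nlinarith [Real.pi_gt_three]⟩
  have hNf : Nf f f1 f2 g t r γ β - (g (r - t + v ^ 2, τ) - f1 (r - t + v ^ 2, τ)) =
      f (r - ρ * cos β, ρ * sin β) / t + (1 - cos γ * cos β) * f1 (r - ρ * cos β, ρ * sin β)
      + cos γ * sin β * f2 (r - ρ * cos β, ρ * sin β)
      - (f1 (r - ρ * cos β, ρ * sin β) - f1 (r - t + v ^ 2, τ))
      + (g (r - ρ * cos β, ρ * sin β) - g (r - t + v ^ 2, τ)) := by
    unfold Nf; rw [← hρ]; ring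
  rw [hNf]
  have l1 := (D.lf1 (r - ρ * cos β) (ρ * sin β) (r - t + v ^ 2) τ).trans
    (mul_le_mul_of_nonneg_left (add_le_add eP1 eP2) hK)
  have l2 := (D.lg (r - ρ * cos β) (ρ * sin β) (r - t + v ^ 2) τ).trans
    (mul_le_mul_of_nonneg_left (add_le_add eP1 eP2) hK)
  have l3 : |f (r - ρ * cos β, ρ * sin β) / t| ≤ K * X := by
    rw [abs_div, abs_of_pos ht0]
    calc _ ≤ K / t := by gcongr; exact D.bf _
      _ = K * (1 / t) := by ring
      _ ≤ K * X := by gcongr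
  have l4 : |(1 - cos γ * cos β) * f1 (r - ρ * cos β, ρ * sin β)| ≤ 13 * X * K := by
    rw [abs_mul]; exact mul_le_mul hcc (D.bf1 _) (abs_nonneg _) (by positivity)
  have l5 : |cos γ * sin β * f2 (r - ρ * cos β, ρ * sin β)| ≤ 4 * X * K := by
    rw [abs_mul]; refine mul_le_mul ?_ (D.bf2 _) (abs_nonneg _) (by positivity)
    rw [abs_mul]
    calc _ ≤ 1 * |sin β| := by gcongr; exact Real.abs_cos_le_one γ
      _ ≤ _ := by linarith
  have hfin : 80 * K * R ^ 4 / t = 80 * (K * X) := by rw [hX]; ring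
  rw [hfin]
  have hKX : 0 ≤ K * X := by positivity
  rw [abs_le] at l1 l2 l3 l4 l5 ⊢
  constructor <;> linarith [l1.1, l1.2, l2.1, l2.2, l3.1, l3.2, l4.1, l4.2, l5.1, l5.2]
end

/-! ### The estimate near the light cone -/

section
variable {R K : ℝ} {f f1 f2 g : ℝ × ℝ → ℝ}

theorem Dat.kir_cont (D : Dat R K f f1 f2 g) (t r : ℝ) :
    Continuous (fun q : ℝ × ℝ => kir f f1 f2 g t r q.1 q.2) := by
  have := D.cf; have := D.cf1; have := D.cf2; have := D.cg
  unfold kir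
  fun_prop

/-- The source function of the limiting field in direction `(1, 0)`. -/
def hf (f1 g : ℝ × ℝ → ℝ) (p : ℝ × ℝ) : ℝ := g p - f1 p

theorem Dat.hf_supp (D : Dat R K f f1 f2 g) : Supp R (hf f1 g) := by
  intro p hp; simp [hf, D.sf1 p hp, D.sg p hp]

theorem Dat.hf_cont (D : Dat R K f f1 f2 g) : Continuous (hf f1 g) := D.cg.sub D.cf1

theorem Dat.hf_bd (D : Dat R K f f1 f2 g) (p : ℝ × ℝ) : |hf f1 g p| ≤ 2 * K := by
  have h1 := D.bf1 p
  have h2 := D.bg p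
  unfold hf
  rw [abs_le] at *
  constructor <;> linarith [h1.1, h1.2, h2.1, h2.2]

theorem int_bound {F : ℝ → ℝ} {a b C : ℝ} (hab : a ≤ b) (h : ∀ x, a ≤ x → x ≤ b → |F x| ≤ C) :
    |∫ x in a..b, F x| ≤ C * (b - a) := by
  have := intervalIntegral.norm_integral_le_of_norm_le_const (f := F) (a := a) (b := b) (C := C)
    (by
      intro x hx
      rw [Set.uIoc_of_le hab] at hx
      exact h x hx.1.le hx.2)
  rwa [Real.norm_eq_abs, abs_of_nonneg (sub_nonneg.2 hab)] at this

theorem Dat.B_bound (D : Dat R K f f1 f2 g) (σ : ℝ) :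
    |∫ v in (0:ℝ)..(3 * R), ∫ τ in (-(2 * R))..(2 * R), hf f1 g (σ + v ^ 2, τ)| ≤ 24 * K * R ^ 2 := by
  have hR := D.hR
  have h1 := int_bound (F := fun v => ∫ τ in (-(2 * R))..(2 * R), hf f1 g (σ + v ^ 2, τ))
    (a := 0) (b := 3 * R) (C := 2 * K * (2 * R - -(2 * R))) (by linarith)
    (fun v _ _ => int_bound (by linarith) (fun τ _ _ => D.hf_bd _))
  refine h1.trans (le_of_eq ?_)
  ring

theorem Dat.R2_near (D : Dat R K f f1 f2 g) {σ : ℝ} (hσ : -σ ≤ 2 * R) :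
    R2 (fun a b => hf f1 g (a, b)) σ 1 0 = (1 / (√2 * π)) *
      ∫ v in (0:ℝ)..(3 * R), ∫ τ in (-(2 * R))..(2 * R), hf f1 g (σ + v ^ 2, τ) := by
  have hR := D.hR
  exact R2_eq (by linarith) (by linarith) D.hf_supp (by linarith) (by nlinarith)

/-- The latitude integral, rescaled by `δ = √(2/t)`; only a bounded range of the new variable
contributes near the light cone. -/
theorem Dat.hemi_near (D : Dat R K f f1 f2 g) {t r δ : ℝ} (ht : 100 * R ^ 2 ≤ t) (hδ0 : 0 < δ)
    (hδ : δ ^ 2 = 2 / t) (hs2 : t - r ≤ 2 * R) :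
    hemi (kir f f1 f2 g t r) =
      δ * ∫ v in (0:ℝ)..(3 * R), ∫ β in (-π)..π, kir f f1 f2 g t r (δ * v) β := by
  have hR := D.hR
  have ht0 : 0 < t := by nlinarith
  have h1 := intervalIntegral.integral_comp_mul_left (a := 0) (b := π / 2 / δ)
    (fun γ => ∫ β in (-π)..π, kir f f1 f2 g t r γ β) hδ0.ne'
  have e : δ * (π / 2 / δ) = π / 2 := by field_simp
  rw [mul_zero, e, smul_eq_mul] at h1
  have hlen : 3 * R ≤ π / 2 / δ := by
    rw [le_div_iff₀ hδ0]
    apply abs_le_of_sq_le_sq' _ (by positivity) |>.2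
    rw [mul_pow, hδ]
    have : (3 * R) ^ 2 * (2 / t) ≤ 18 / 100 := by
      rw [mul_div_assoc', div_le_iff₀ ht0]; nlinarith
    nlinarith [Real.pi_gt_three]
  have h2 : (∫ v in (0:ℝ)..(π / 2 / δ), ∫ β in (-π)..π, kir f f1 f2 g t r (δ * v) β) =
      ∫ v in (0:ℝ)..(3 * R), ∫ β in (-π)..π, kir f f1 f2 g t r (δ * v) β := by
    apply shrink le_rfl (by linarith) hlen
    intro v hv0 hv1 hv
    have hv3 : 3 * R < v := by
      rcases hv with h | h
      · linarith
      · exact h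
    have hk : ∀ β, kir f f1 f2 g t r (δ * v) β = 0 := by
      intro β
      rw [kir_eq_Nf ht0, D.Nf_zero, mul_zero]
      have hγ0 : 0 ≤ δ * v := by positivity
      have hγ1 : δ * v ≤ π / 2 := by
        calc δ * v ≤ δ * (π / 2 / δ) := by gcongr
          _ = π / 2 := e
      have hc := Real.cos_le_one_sub_mul_cos_sq (x := δ * v)
        (by rw [abs_of_nonneg hγ0]; linarith [Real.pi_pos])
      have hc0 : 0 ≤ cos (δ * v) :=
        Real.cos_nonneg_of_neg_pi_div_two_le_of_le (by linarith [Real.pi_pos]) hγ1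
      have hρ : t * cos (δ * v) ≤ t - 4 * v ^ 2 / π ^ 2 := by
        calc t * cos (δ * v) ≤ t * (1 - 2 / π ^ 2 * (δ * v) ^ 2) := by gcongr
          _ = t - 4 * v ^ 2 / π ^ 2 := by rw [mul_pow, hδ]; field_simp; ring
      have hρ2 : 3 * R < 4 * v ^ 2 / π ^ 2 := by
        rw [lt_div_iff₀ (by positivity)]
        have hpi : π ^ 2 < 10 := by nlinarith [Real.pi_lt_d2, Real.pi_pos]
        nlinarith
      have h0 : t * cos (δ * v) * cos β ≤ t * cos (δ * v) :=
        mul_le_of_le_one_right (by positivity) (Real.cos_le_one _)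
      have : R < r - t * cos (δ * v) * cos β := by linarith
      nlinarith [sq_nonneg (t * cos (δ * v) * sin β)]
    simp [hk]
  rw [← h2, h1, hemi, ← mul_assoc, mul_inv_cancel₀ hδ0.ne', one_mul]

theorem int_sub_bound {F G : ℝ → ℝ} {a b C : ℝ} (hF : Continuous F) (hG : Continuous G)
    (hab : a ≤ b) (h : ∀ x, a ≤ x → x ≤ b → |F x - G x| ≤ C) :
    |(∫ x in a..b, F x) - ∫ x in a..b, G x| ≤ C * (b - a) := by
  rw [← intervalIntegral.integral_sub (hF.intervalIntegrable _ _) (hG.intervalIntegrable _ _)]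
  exact int_bound hab h

/-- The longitude integral at the rescaled latitude `v`, compared with the integral over the
vertical line at `r - t + v²`. -/
theorem Dat.near_inner (D : Dat R K f f1 f2 g) {t r δ v : ℝ} (ht : 100 * R ^ 2 ≤ t) (hrR : R < r)
    (hδ : δ ^ 2 = 2 / t) (hv0 : 0 ≤ v) (hv1 : v ≤ 3 * R) :
    |(∫ β in (-π)..π, kir f f1 f2 g t r (δ * v) β) -
        ∫ τ in (-(2 * R))..(2 * R), hf f1 g (r - t + v ^ 2, τ)| ≤
      80 * K * R ^ 4 / t * (2 * R - -(2 * R)) := by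
  have hR := D.hR
  have ht0 : 0 < t := lt_of_lt_of_le (by positivity) ht
  have h20 : |(0:ℝ)| ≤ 2 * R := by rw [abs_zero]; linarith
  have hc := D.hf_cont
  have hρ := (D.near_point (r := r) ht hδ hv0 hv1 h20).2
  have c0 : Continuous fun τ : ℝ => (δ * v, τ / (t * cos (δ * v))) := by fun_prop
  have c1 := (D.Nf_cont t r).comp c0
  have c2 : Continuous fun τ : ℝ => hf f1 g (r - t + v ^ 2, τ) := by fun_prop
  have hpt : ∀ τ, -(2 * R) ≤ τ → τ ≤ 2 * R →
      |Nf f f1 f2 g t r (δ * v) (τ / (t * cos (δ * v))) - hf f1 g (r - t + v ^ 2, τ)| ≤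
        80 * K * R ^ 4 / t := by
    intro τ h1 h2
    have hp := (D.near_point (r := r) ht hδ hv0 hv1 (abs_le.2 ⟨h1, h2⟩)).1
    unfold hf
    exact hp
  have hab : -(2 * R) ≤ 2 * R := by linarith
  rw [D.inner ht0 hrR hρ]
  exact int_sub_bound c1 c2 hab hpt

theorem Dat.near_diff (D : Dat R K f f1 f2 g) {t r δ : ℝ} (ht : 100 * R ^ 2 ≤ t) (hrR : R < r)
    (hδ : δ ^ 2 = 2 / t) :
    |(∫ v in (0:ℝ)..(3 * R), ∫ β in (-π)..π, kir f f1 f2 g t r (δ * v) β) -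
      ∫ v in (0:ℝ)..(3 * R), ∫ τ in (-(2 * R))..(2 * R), hf f1 g (r - t + v ^ 2, τ)| ≤
    960 * K * R ^ 6 / t := by
  have hR := D.hR
  have hab : 0 ≤ 3 * R := by linarith
  have cI : Continuous (fun v : ℝ => ∫ β in (-π)..π, kir f f1 f2 g t r (δ * v) β) :=
    cont_parint (fun v β => kir f f1 f2 g t r (δ * v) β) _ _
      ((D.kir_cont t r).comp (by fun_prop : Continuous fun q : ℝ × ℝ => (δ * q.1, q.2)))
  have hc := D.hf_cont
  have cG : Continuous (fun v : ℝ => ∫ τ in (-(2 * R))..(2 * R), hf f1 g (r - t + v ^ 2, τ)) :=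
    cont_parint (fun v τ => hf f1 g (r - t + v ^ 2, τ)) _ _ (by fun_prop)
  have key := int_sub_bound cI cG hab (fun v hv0 hv1 => D.near_inner ht hrR hδ hv0 hv1)
  have e : 960 * K * R ^ 6 / t = 80 * K * R ^ 4 / t * (2 * R - -(2 * R)) * (3 * R - 0) := by ring
  rw [e]
  exact key

/-- Large times near the light cone: the error is `O(1/t)`. -/
theorem Dat.near (D : Dat R K f f1 f2 g) {t r : ℝ} (ht : 100 * R ^ 2 ≤ t)
    (hs1 : -R ≤ t - r) (hs2 : t - r ≤ 2 * R) :
    |√r * Jf f f1 f2 g t r - R2 (fun a b => hf f1 g (a, b)) (r - t) 1 0| ≤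
      1100 * K * R ^ 6 / t := by
  have hR := D.hR
  have hK := D.hK
  have hR2 : 1 ≤ R ^ 2 := by nlinarith
  have ht0 : 0 < t := by nlinarith
  have hrR : R < r := by nlinarith
  have hr0 : 0 < r := by linarith
  set δ := √(2 / t) with hδd
  have hδ0 : 0 < δ := Real.sqrt_pos.2 (by positivity)
  have hδ : δ ^ 2 = 2 / t := Real.sq_sqrt (by positivity)
  rw [D.R2_near (by linarith), Jf, D.hemi_near ht hδ0 hδ hs2]
  set A := ∫ v in (0:ℝ)..(3 * R), ∫ β in (-π)..π, kir f f1 f2 g t r (δ * v) β with hA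
  have hBb := D.B_bound (r - t)
  set B := ∫ v in (0:ℝ)..(3 * R), ∫ τ in (-(2 * R))..(2 * R), hf f1 g (r - t + v ^ 2, τ) with hB
  have hAB : |A - B| ≤ 960 * K * R ^ 6 / t := D.near_diff ht hrR hδ
  have h2 : √2 ^ 2 = 2 := Real.sq_sqrt (by norm_num)
  have h20 : 0 < √2 := by positivity
  -- `q = √(r/t)` is the mismatch of the prefactors of the two sides
  set q := √r * δ / √2 with hq
  have hq0 : 0 ≤ q := by positivity
  have hq2 : q ^ 2 = r / t := by
    rw [hq, div_pow, mul_pow, hδ, Real.sq_sqrt hr0.le, h2]; field_simp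
  have hq1 : |q - 1| ≤ 2 * R / t := by
    have h3 : |q - 1| ≤ |q ^ 2 - 1| := by
      have : q ^ 2 - 1 = (q - 1) * (q + 1) := by ring
      rw [this, abs_mul, abs_of_nonneg (by linarith : 0 ≤ q + 1)]
      exact le_mul_of_one_le_right (abs_nonneg _) (by linarith)
    refine h3.trans ?_
    have : q ^ 2 - 1 = (r - t) / t := by rw [hq2]; field_simp
    rw [this, abs_div, abs_of_pos ht0]
    gcongr
    rw [abs_le]; constructor <;> linarith
  have hmain : √r * (1 / (2 * π) * (δ * A)) - 1 / (√2 * π) * B =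
      1 / (√2 * π) * ((q - 1) * A + (A - B)) := by
    have : √r * δ = q * √2 := by rw [hq]; field_simp
    have e1 : √r * (1 / (2 * π) * (δ * A)) = (√r * δ) * (1 / (2 * π)) * A := by ring
    have e2 : q * √2 * (1 / (2 * π)) * A = 1 / (√2 * π) * (q * A) := by
      field_simp
      linear_combination (q * A) * h2
    rw [e1, this, e2]; ring
  have hc1 : |1 / (√2 * π)| ≤ 1 := by
    rw [abs_of_pos (by positivity), div_le_one (by positivity)]
    have : 1 ≤ √2 := by rw [Real.one_le_sqrt]; norm_num
    nlinarith [Real.pi_gt_three]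
  have hAb : |A| ≤ 34 * K * R ^ 4 := by
    have h3 : 960 * K * R ^ 6 / t ≤ 10 * K * R ^ 4 := by
      rw [div_le_iff₀ ht0]
      have : 0 ≤ K * R ^ 4 := by positivity
      calc 960 * K * R ^ 6 = K * R ^ 4 * (960 * R ^ 2) := by ring
        _ ≤ K * R ^ 4 * (10 * t) := mul_le_mul_of_nonneg_left (by linarith) this
        _ = _ := by ring
    have h4 : K * R ^ 2 ≤ K * R ^ 4 := by gcongr <;> norm_num
    have : A = B + (A - B) := by ring
    rw [this]
    refine (abs_add_le _ _).trans ?_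
    linarith
  rw [hmain, abs_mul]
  calc |1 / (√2 * π)| * |(q - 1) * A + (A - B)| ≤ 1 * |(q - 1) * A + (A - B)| := by gcongr
    _ ≤ |q - 1| * |A| + |A - B| := by rw [one_mul, ← abs_mul]; exact abs_add_le _ _
    _ ≤ 2 * R / t * (34 * K * R ^ 4) + 960 * K * R ^ 6 / t := by gcongr
    _ = (68 * (K * R ^ 5) + 960 * (K * R ^ 6)) / t := by ring
    _ ≤ (1100 * (K * R ^ 6)) / t := by
      gcongr
      have : K * R ^ 5 ≤ K * R ^ 6 := by gcongr <;> norm_num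
      have : 0 ≤ K * R ^ 6 := by positivity
      linarith
    _ = _ := by ring

/-- The weight `⟨t+r⟩⁻¹⟨t-r⟩^{-1/2}`. -/
def Wt (t r : ℝ) : ℝ := (jb (t + r))⁻¹ * (√(jb (t - r)))⁻¹

theorem jb_le (z : ℝ) : jb z ≤ 1 + |z| := by
  unfold jb
  rw [Real.sqrt_le_left (by positivity), ← sq_abs z]
  nlinarith [abs_nonneg z]

theorem jb_pos (z : ℝ) : 0 < jb z := Real.sqrt_pos.2 (by positivity)

/-- Comparison with `Wt` through weights without the Japanese brackets. -/
theorem le_Wt {X A t r : ℝ} (hA : 0 ≤ A) (ht : 0 ≤ t) (hr : 0 ≤ r)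
    (h : X * ((1 + t + r) * √(1 + |t - r|)) ≤ A) : X ≤ A * Wt t r := by
  have h1 : jb (t + r) ≤ 1 + t + r := by
    have := jb_le (t + r); rw [abs_of_nonneg (by linarith)] at this; linarith
  have h2 : √(jb (t - r)) ≤ √(1 + |t - r|) := Real.sqrt_le_sqrt (jb_le _)
  have p1 := jb_pos (t + r)
  have p2 := Real.sqrt_pos.2 (jb_pos (t - r))
  have h3 : X ≤ A * ((1 + t + r)⁻¹ * (√(1 + |t - r|))⁻¹) := by
    rw [← mul_inv, ← div_eq_mul_inv, le_div_iff₀ (by positivity)]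
    exact h
  refine h3.trans ?_
  unfold Wt
  gcongr

theorem Wt_nonneg (t r : ℝ) : 0 ≤ Wt t r := by
  have p1 := jb_pos (t + r)
  unfold Wt; positivity

/-- Bounded times: no decay is required. -/
theorem Dat.bounded (D : Dat R K f f1 f2 g) {t r : ℝ} (ht0 : 0 ≤ t) (hr0 : 0 < r)
    (ht : t ≤ 100 * R ^ 2) (hs1 : -R ≤ t - r) (hs2 : t - r ≤ 2 * R) :
    |√r * Jf f f1 f2 g t r - R2 (fun a b => hf f1 g (a, b)) (r - t) 1 0| ≤ 7000 * K * R ^ 3 := by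
  have hR := D.hR
  have hK := D.hK
  have hR2 : 1 ≤ R ^ 2 := by nlinarith
  have hπ := Real.pi_pos
  have hk : ∀ γ β, |kir f f1 f2 g t r γ β| ≤ 301 * K * R ^ 2 := by
    intro γ β
    unfold kir
    set P := ((r - t * cos γ * cos β, t * cos γ * sin β) : ℝ × ℝ)
    rw [abs_mul]
    calc |cos γ| * |f P + t * cos γ * (-cos β * f1 P + sin β * f2 P) + t * g P|
        ≤ 1 * (K + t * 1 * (1 * K + 1 * K) + t * K) := by
          refine mul_le_mul (Real.abs_cos_le_one γ) ?_ (abs_nonneg _) zero_le_one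
          refine (abs_add_le _ _).trans (add_le_add ((abs_add_le _ _).trans
            (add_le_add (D.bf _) ?_)) ?_)
          · rw [abs_mul, abs_mul, abs_of_nonneg ht0]
            refine mul_le_mul ?_ ?_ (abs_nonneg _) (by positivity)
            · gcongr; exact Real.abs_cos_le_one γ
            · refine (abs_add_le _ _).trans (add_le_add ?_ ?_)
              · rw [abs_mul, abs_neg]
                exact mul_le_mul (Real.abs_cos_le_one β) (D.bf1 _) (abs_nonneg _) zero_le_one
              · rw [abs_mul]
                exact mul_le_mul (Real.abs_sin_le_one β) (D.bf2 _) (abs_nonneg _) zero_le_one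
          · rw [abs_mul, abs_of_nonneg ht0]; gcongr; exact D.bg _
      _ = K * (1 + 3 * t) := by ring
      _ ≤ K * (301 * R ^ 2) := by gcongr; linarith
      _ = _ := by ring
  have hJ : |Jf f f1 f2 g t r| ≤ 602 * K * R ^ 2 := by
    have h1 : |hemi (kir f f1 f2 g t r)| ≤ 301 * K * R ^ 2 * (π - -π) * (π / 2 - 0) :=
      int_bound (by linarith) (fun γ _ _ => int_bound (by linarith) (fun β _ _ => hk γ β))
    unfold Jf
    rw [abs_mul, abs_of_pos (by positivity)]
    calc _ ≤ 1 / (2 * π) * (301 * K * R ^ 2 * (π - -π) * (π / 2 - 0)) := by gcongr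
      _ = 301 * K * R ^ 2 * (π / 2) := by field_simp; ring
      _ ≤ 301 * K * R ^ 2 * 2 := by gcongr; linarith [Real.pi_lt_four]
      _ = _ := by ring
  have hr : √r ≤ 11 * R := by
    rw [Real.sqrt_le_left (by linarith)]; nlinarith
  have hc1 : |1 / (√2 * π)| ≤ 1 := by
    rw [abs_of_pos (by positivity), div_le_one (by positivity)]
    have : 1 ≤ √2 := by rw [Real.one_le_sqrt]; norm_num
    nlinarith [Real.pi_gt_three]
  have h2 : |R2 (fun a b => hf f1 g (a, b)) (r - t) 1 0| ≤ 24 * K * R ^ 2 := by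
    rw [D.R2_near (by linarith), abs_mul]
    calc _ ≤ 1 * (24 * K * R ^ 2) := by gcongr; exact D.B_bound _
      _ = _ := one_mul _
  refine (abs_sub _ _).trans ?_
  rw [abs_mul, abs_of_nonneg (Real.sqrt_nonneg r)]
  calc _ ≤ 11 * R * (602 * K * R ^ 2) + 24 * K * R ^ 2 := by gcongr
    _ = 6622 * (K * R ^ 3) + 24 * (K * R ^ 2) := by ring
    _ ≤ 6622 * (K * R ^ 3) + 24 * (K * R ^ 3) := by gcongr <;> norm_num
    _ ≤ _ := by
      have : 0 ≤ K * R ^ 3 := by positivity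
      linarith

/-- The estimate outside of and near the light cone. -/
theorem Dat.core_near (D : Dat R K f f1 f2 g) {t r : ℝ} (ht0 : 0 ≤ t) (hr0 : 0 < r)
    (hs2 : t - r ≤ 2 * R) :
    |√r * Jf f f1 f2 g t r - R2 (fun a b => hf f1 g (a, b)) (r - t) 1 0| ≤
      5000000 * K * R ^ 7 * Wt t r := by
  have hR := D.hR
  have hK := D.hK
  have hR2 : 1 ≤ R ^ 2 := by nlinarith
  have hRR : R ≤ R ^ 2 := by nlinarith
  have hKR : 0 ≤ K * R ^ 7 := by positivity
  -- outside the light cone both terms vanish, by finite speed of propagation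
  by_cases hs1 : t - r < -R
  · have hk : ∀ γ β, kir f f1 f2 g t r γ β = 0 := by
      intro γ β
      have hP : R ^ 2 < (r - t * cos γ * cos β) ^ 2 + (t * cos γ * sin β) ^ 2 := by
        have h1 : cos γ * cos β ≤ 1 := by
          have := Real.abs_cos_le_one γ
          have := Real.abs_cos_le_one β
          have h : |cos γ * cos β| ≤ 1 := by
            rw [abs_mul]; exact mul_le_one₀ ‹_› (abs_nonneg _) ‹_›
          exact (abs_le.1 h).2
        have h2 : t * (cos γ * cos β) ≤ t := mul_le_of_le_one_right ht0 h1
        have : R < r - t * cos γ * cos β := by rw [mul_assoc]; linarith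
        nlinarith [sq_nonneg (t * cos γ * sin β)]
      unfold kir
      rw [D.sf (r - t * cos γ * cos β, t * cos γ * sin β) hP,
        D.sf1 (r - t * cos γ * cos β, t * cos γ * sin β) hP,
        D.sf2 (r - t * cos γ * cos β, t * cos γ * sin β) hP,
        D.sg (r - t * cos γ * cos β, t * cos γ * sin β) hP]
      simp
    have hJ : Jf f f1 f2 g t r = 0 := by simp [Jf, hemi, hk]
    rw [hJ, R2_eq (V := 0) (by linarith) le_rfl D.hf_supp le_rfl (by linarith)]
    simp only [mul_zero, intervalIntegral.integral_same, sub_zero, abs_zero]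
    have := Wt_nonneg t r
    positivity
  · push Not at hs1
    have habs : |t - r| ≤ 2 * R := abs_le.2 ⟨by linarith, hs2⟩
    have hsq : √(1 + |t - r|) ≤ 3 * R := by
      rw [Real.sqrt_le_left (by linarith)]; nlinarith
    have hsq0 := Real.sqrt_nonneg (1 + |t - r|)
    apply le_Wt (by positivity) ht0 hr0.le
    by_cases ht : t ≤ 100 * R ^ 2
    · calc _ ≤ 7000 * K * R ^ 3 * (203 * R ^ 2 * (3 * R)) := by
            gcongr
            · exact D.bounded ht0 hr0 ht hs1 hs2
            · linarith
        _ = 4263000 * (K * R ^ 6) := by ring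
        _ ≤ 4263000 * (K * R ^ 7) := by gcongr <;> norm_num
        _ ≤ _ := by linarith
    · push Not at ht
      have htp : 0 < t := by nlinarith
      calc _ ≤ 1100 * K * R ^ 6 / t * (3 * t * (3 * R)) := by
            gcongr
            · exact D.near ht.le hs1 hs2
            · nlinarith
        _ = 9900 * (K * R ^ 7) := by field_simp; ring
        _ ≤ _ := by linarith
end

/-! ### Comparison of kernels inside the cone -/

theorem inv_diff {A A0 a a0 d : ℝ} (ha : 0 < a) (ha0 : 0 < a0) (hA : a ≤ A) (hA0 : a0 ≤ A0)
    (hd : |A - A0| ≤ d) : |1 / A - 1 / A0| ≤ d / (a * a0) := by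
  have h1 : 0 < A := by linarith
  have h2 : 0 < A0 := by linarith
  have hd0 : 0 ≤ d := (abs_nonneg _).trans hd
  have e : 1 / A - 1 / A0 = (A0 - A) / (A * A0) := by field_simp
  rw [e, abs_div, abs_sub_comm, abs_of_pos (mul_pos h1 h2)]
  gcongr

theorem sqrt_diff {X Y c d : ℝ} (hX : 0 ≤ X) (hY : 0 ≤ Y) (hc : 0 < c) (h : c ≤ √X + √Y)
    (hd : |X - Y| ≤ d) : |√X - √Y| ≤ d / c := by
  rw [le_div_iff₀ hc]
  have e : X - Y = (√X - √Y) * (√X + √Y) := by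
    have h1 := Real.sq_sqrt hX
    have h2 := Real.sq_sqrt hY
    linear_combination -h1 + h2
  have h3 : 0 ≤ √X + √Y := by linarith
  calc |√X - √Y| * c ≤ |√X - √Y| * (√X + √Y) := by gcongr
    _ = |X - Y| := by rw [e, abs_mul, abs_of_nonneg h3]
    _ ≤ d := hd

/-- A product of four factors inherits, up to a factor four, their relative variation. -/
theorem prod4_diff {n n0 u u0 v v0 w w0 A B C E ε : ℝ}
    (hn : |n| ≤ A) (hn0 : |n0| ≤ A) (hu : |u| ≤ B) (hu0 : |u0| ≤ B) (hv : |v| ≤ C) (hv0 : |v0| ≤ C)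
    (hw : |w| ≤ E)
    (dn : |n - n0| ≤ A * ε) (du : |u - u0| ≤ B * ε) (dv : |v - v0| ≤ C * ε)
    (dw : |w - w0| ≤ E * ε) :
    |n * u * v * w - n0 * u0 * v0 * w0| ≤ 4 * (A * B * C * E * ε) := by
  have hA := (abs_nonneg _).trans hn
  have hB := (abs_nonneg _).trans hu
  have hC := (abs_nonneg _).trans hv
  have hE := (abs_nonneg _).trans hw
  have hAe := (abs_nonneg _).trans dn
  have hBe := (abs_nonneg _).trans du
  have hCe := (abs_nonneg _).trans dv
  have hEe := (abs_nonneg _).trans dw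
  have e : n * u * v * w - n0 * u0 * v0 * w0 = (n - n0) * u * v * w + n0 * (u - u0) * v * w +
    n0 * u0 * (v - v0) * w + n0 * u0 * v0 * (w - w0) := by ring
  have h1 : |(n - n0) * u * v * w| ≤ A * ε * B * C * E := by
    rw [abs_mul, abs_mul, abs_mul]; gcongr
  have h2 : |n0 * (u - u0) * v * w| ≤ A * (B * ε) * C * E := by
    rw [abs_mul, abs_mul, abs_mul]; gcongr
  have h3 : |n0 * u0 * (v - v0) * w| ≤ A * B * (C * ε) * E := by
    rw [abs_mul, abs_mul, abs_mul]; gcongr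
  have h4 : |n0 * u0 * v0 * (w - w0)| ≤ A * B * C * (E * ε) := by
    rw [abs_mul, abs_mul, abs_mul]; gcongr
  rw [e]
  calc _ ≤ |(n - n0) * u * v * w| + |n0 * (u - u0) * v * w| + |n0 * u0 * (v - v0) * w| +
        |n0 * u0 * v0 * (w - w0)| :=
        (abs_add_le _ _).trans (add_le_add ((abs_add_le _ _).trans (add_le_add (abs_add_le _ _)
          le_rfl)) le_rfl)
    _ ≤ A * ε * B * C * E + A * (B * ε) * C * E + A * B * (C * ε) * E + A * B * C * (E * ε) := by
        gcongr
    _ = _ := by ring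

/-- Identity behind the smallness of the difference between the exact and the limiting kernel. -/
theorem kernel_diff {r q Q : ℝ} (hr : 0 < r) (hq : 0 < q) (hQ : 0 < Q) :
    √r / √Q - 1 / √(2 * q) =
      -((Q - 2 * r * q) * (1 / √Q) * (1 / √(2 * q)) * (1 / (√Q + √r * √(2 * q)))) := by
  have h1 := Real.sq_sqrt hr.le
  have h2 := Real.sq_sqrt hQ.le
  have h3 := Real.sq_sqrt (by positivity : 0 ≤ 2 * q)
  have h4 : 0 < √r := Real.sqrt_pos.2 hr
  have h5 : 0 < √Q := Real.sqrt_pos.2 hQ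
  have h6 : 0 < √(2 * q) := Real.sqrt_pos.2 (by positivity)
  have e : Q - 2 * r * q = (√Q - √r * √(2 * q)) * (√Q + √r * √(2 * q)) := by
    calc Q - 2 * r * q = √Q ^ 2 - √r ^ 2 * √(2 * q) ^ 2 := by rw [h1, h2, h3]; ring
      _ = _ := by ring
  rw [e]
  field_simp
  ring

/-- The exact kernel `√r / √Q` at the point `(a, b)` of the support and at the origin, where
`Q = t² - |(r, 0) - (a, b)|²`, with `s = t - r`: its size, its oscillation over the support, and the
oscillation of its difference from the limiting kernel `1 / √(2 (s + a))`. Only the last one gains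
a factor `1/t`. -/
theorem far_kernel {R r s t a b Q Q0 : ℝ} (hR : 1 ≤ R) (hr : 0 < r) (hs : 2 * R ≤ s) (ht : t = r + s)
    (hy : a ^ 2 + b ^ 2 ≤ R ^ 2) (hQ : Q = 2 * r * (s + a) + (s ^ 2 - (a ^ 2 + b ^ 2)))
    (hQ0 : Q0 = 2 * r * s + s ^ 2) :
    |√r / √Q| ≤ 2 / √s ∧ |√r / √Q - √r / √Q0| ≤ 4 * R / (s * √s) ∧
    |(√r / √Q - 1 / √(2 * (s + a))) - (√r / √Q0 - 1 / √(2 * s))| ≤ 48 * R / (t * √s) := by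
  have hs0 : 0 < s := by linarith
  have ht0 : 0 < t := by linarith
  have ha : |a| ≤ R := abs_le_of_sq_le_sq (by nlinarith [sq_nonneg b]) (by linarith)
  obtain ⟨ha1, ha2⟩ := abs_le.1 ha
  have hRs : R ^ 2 ≤ R * s := by nlinarith
  have hRs2 : 4 * R ^ 2 ≤ s ^ 2 := by nlinarith
  have hy0 : 0 ≤ a ^ 2 + b ^ 2 := by positivity
  have hq : 0 < s + a := by linarith
  have hrs : 0 < r * s := mul_pos hr hs0
  have hra : r * (s - R) ≤ r * (s + a) := by gcongr; linarith
  have hra2 : r * (s / 2) ≤ r * (s - R) := by gcongr; linarith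
  have hQst : (s * t) / 4 ≤ Q := by rw [hQ, ht]; nlinarith
  have hQ0st : s * t ≤ Q0 := by rw [hQ0, ht]; nlinarith
  have hst : 0 < s * t := mul_pos hs0 ht0
  have hQp : 0 < Q := by linarith
  have hQ0p : 0 < Q0 := by linarith
  set σ := √s with hσ
  set τ := √t with hτ
  have hσ0 : 0 < σ := Real.sqrt_pos.2 hs0
  have hτ0 : 0 < τ := Real.sqrt_pos.2 ht0
  have hσ2 : σ ^ 2 = s := Real.sq_sqrt hs0.le
  have hτ2 : τ ^ 2 = t := Real.sq_sqrt ht0.le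
  have hστ : √(s * t) = σ * τ := Real.sqrt_mul hs0.le t
  have hστ0 : 0 < σ * τ := mul_pos hσ0 hτ0
  have hrτ : √r ≤ τ := Real.sqrt_le_sqrt (by linarith)
  have hr0 : 0 < √r := Real.sqrt_pos.2 hr
  -- lower bounds of the three square roots
  have hA : σ * τ / 2 ≤ √Q := by
    apply Real.le_sqrt_of_sq_le
    calc (σ * τ / 2) ^ 2 = σ ^ 2 * τ ^ 2 / 4 := by ring
      _ ≤ Q := by rw [hσ2, hτ2]; exact hQst
  have hA0 : σ * τ ≤ √Q0 := by rw [← hστ]; exact Real.sqrt_le_sqrt hQ0st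
  have hB : σ ≤ √(2 * (s + a)) := Real.sqrt_le_sqrt (by linarith)
  have hB0 : σ ≤ √(2 * s) := Real.sqrt_le_sqrt (by linarith)
  -- their variations
  have dQ : |Q - Q0| ≤ 2 * R * t := by
    have e : Q - Q0 = 2 * r * a - (a ^ 2 + b ^ 2) := by rw [hQ, hQ0]; ring
    have h1 : |r * a| ≤ r * R := by rw [abs_mul, abs_of_pos hr]; gcongr
    obtain ⟨h2, h3⟩ := abs_le.1 h1
    rw [e, ht, abs_le]
    constructor <;> nlinarith
  have dA : |√Q - √Q0| ≤ 2 * R * t / (σ * τ) :=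
    sqrt_diff hQp.le hQ0p.le hστ0 (by linarith [Real.sqrt_nonneg Q]) dQ
  have eA : 2 * R * t / (σ * τ) = 2 * R * τ / σ := by
    rw [← hτ2]; field_simp
  rw [eA] at dA
  have dB : |√(2 * (s + a)) - √(2 * s)| ≤ 2 * R / (2 * σ) := by
    refine sqrt_diff (by positivity) (by positivity) (by positivity) (by linarith) ?_
    have e : 2 * (s + a) - 2 * s = 2 * a := by ring
    rw [e, abs_mul, abs_of_pos (by norm_num : (0:ℝ) < 2)]
    gcongr
  have eB : 2 * R / (2 * σ) = R / σ := by field_simp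
  rw [eB] at dB
  have dE : |(√Q + √r * √(2 * (s + a))) - (√Q0 + √r * √(2 * s))| ≤ 3 * R * τ / σ := by
    have e : (√Q + √r * √(2 * (s + a))) - (√Q0 + √r * √(2 * s)) =
      (√Q - √Q0) + √r * (√(2 * (s + a)) - √(2 * s)) := by ring
    rw [e]
    calc _ ≤ |√Q - √Q0| + |√r * (√(2 * (s + a)) - √(2 * s))| := abs_add_le _ _
      _ ≤ 2 * R * τ / σ + τ * (R / σ) := by
        rw [abs_mul, abs_of_pos hr0]; gcongr
      _ = _ := by ring
  have hE : σ * τ / 2 ≤ √Q + √r * √(2 * (s + a)) := by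
    have : 0 ≤ √r * √(2 * (s + a)) := by positivity
    linarith
  have hE0 : σ * τ ≤ √Q0 + √r * √(2 * s) := by
    have : 0 ≤ √r * √(2 * s) := by positivity
    linarith
  have hh : 0 < σ * τ / 2 := by positivity
  have inv_le : ∀ {x X : ℝ}, 0 < x → x ≤ X → |1 / X| ≤ 1 / x := by
    intro x X h1 h2
    have h3 : 0 < X := lt_of_lt_of_le h1 h2
    rw [abs_of_pos (by positivity)]
    gcongr
  have e2 : 1 / (σ * τ / 2) = 2 / (σ * τ) := by field_simp
  have u1 : |1 / √Q| ≤ 2 / (σ * τ) := by rw [← e2]; exact inv_le hh hA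
  have u2 : |1 / √Q0| ≤ 2 / (σ * τ) := by rw [← e2]; exact inv_le hh (by linarith)
  have v1 : |1 / √(2 * (s + a))| ≤ 1 / σ := inv_le hσ0 hB
  have v2 : |1 / √(2 * s)| ≤ 1 / σ := inv_le hσ0 hB0
  have w1 : |1 / (√Q + √r * √(2 * (s + a)))| ≤ 2 / (σ * τ) := by
    rw [← e2]; exact inv_le hh hE
  have du := inv_diff hh hστ0 hA hA0 dA
  have dv := inv_diff hσ0 hσ0 hB hB0 dB
  have dw := inv_diff hh hστ0 hE hE0 dE
  have edu : 2 * R * τ / σ / (σ * τ / 2 * (σ * τ)) = 2 / (σ * τ) * (2 * R / s) := by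
    rw [← hσ2]; field_simp
  have edv : R / σ / (σ * σ) = 1 / σ * (R / s) := by
    rw [← hσ2]; field_simp
  have edw : 3 * R * τ / σ / (σ * τ / 2 * (σ * τ)) = 2 / (σ * τ) * (3 * R / s) := by
    rw [← hσ2]; field_simp
  rw [edu] at du
  rw [edv] at dv
  rw [edw] at dw
  refine ⟨?_, ?_, ?_⟩
  · rw [div_eq_mul_one_div, abs_mul, abs_of_pos hr0]
    calc √r * |1 / √Q| ≤ τ * (2 / (σ * τ)) := by gcongr
      _ = 2 / σ := by field_simp
  · have e : √r / √Q - √r / √Q0 = √r * (1 / √Q - 1 / √Q0) := by ring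
    rw [e, abs_mul, abs_of_pos hr0]
    calc _ ≤ τ * (2 / (σ * τ) * (2 * R / s)) := by gcongr
      _ = 4 * R / (s * σ) := by field_simp; ring
  · rw [kernel_diff hr hq hQp, kernel_diff hr hs0 hQ0p]
    have en : Q - 2 * r * (s + a) = s ^ 2 - (a ^ 2 + b ^ 2) := by rw [hQ]; ring
    have en0 : Q0 - 2 * r * s = s ^ 2 := by rw [hQ0]; ring
    rw [en, en0, neg_sub_neg, abs_sub_comm]
    have hR0 : 0 < R := by linarith
    have dn : |s ^ 2 - (a ^ 2 + b ^ 2) - s ^ 2| ≤ s ^ 2 * (3 * R / s) := by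
      have e : s ^ 2 * (3 * R / s) = 3 * (R * s) := by field_simp
      rw [e, abs_le]
      constructor <;> linarith
    have key := prod4_diff (A := s ^ 2) (B := 2 / (σ * τ)) (C := 1 / σ) (E := 2 / (σ * τ))
      (ε := 3 * R / s) (n := s ^ 2 - (a ^ 2 + b ^ 2)) (n0 := s ^ 2)
      (by rw [abs_le]; constructor <;> linarith) (by rw [abs_of_nonneg (sq_nonneg s)])
      u1 u2 v1 v2 w1
      dn
      (du.trans (by gcongr; norm_num)) (dv.trans (by gcongr; linarith)) dw
    refine key.trans (le_of_eq ?_)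
    rw [← hσ2, ← hτ2]
    field_simp
    norm_num

/-! ### The hemisphere integral in Cartesian coordinates -/

theorem measPres_reflect (r : ℝ) :
    MeasurePreserving (fun z : ℝ × ℝ => (r - z.1, z.2)) (volume : Measure (ℝ × ℝ)) volume := by
  have := (Measure.measurePreserving_sub_left (volume : Measure ℝ) r).prod
    (MeasurePreserving.id (volume : Measure ℝ))
  exact this

theorem integral_reflect (r : ℝ) (F : ℝ × ℝ → ℝ) :
    ∫ z, F z = ∫ z : ℝ × ℝ, F (r - z.1, z.2) := by
  have he : MeasurableEmbedding (fun z : ℝ × ℝ => (r - z.1, z.2)) :=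
    ((MeasurableEquiv.subLeft r).prodCongr (MeasurableEquiv.refl ℝ)).measurableEmbedding
  exact ((measPres_reflect r).integral_comp he F).symm

/-- Polar coordinates for a continuous function vanishing outside the disc of radius `t`. -/
theorem polar_cont {F : ℝ × ℝ → ℝ} {t : ℝ} (ht : 0 ≤ t) (hF : Continuous F)
    (h0 : ∀ ρ β, t < ρ → F (ρ * cos β, ρ * sin β) = 0) :
    ∫ z, F z = ∫ ρ in (0:ℝ)..t, ∫ β in (-π)..π, ρ * F (ρ * cos β, ρ * sin β) := by
  have hππ : -π ≤ π := by linarith [Real.pi_pos]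
  have hk : Continuous (fun p : ℝ × ℝ => p.1 * F (p.1 * cos p.2, p.1 * sin p.2)) := by fun_prop
  have h1 : ∫ z, F z = ∫ p in Set.Ioi (0:ℝ) ×ˢ Set.Ioo (-π) π,
      p.1 * F (p.1 * cos p.2, p.1 * sin p.2) := (integral_comp_polarCoord_symm F).symm
  have h2 : ∫ p in Set.Ioi (0:ℝ) ×ˢ Set.Ioo (-π) π, p.1 * F (p.1 * cos p.2, p.1 * sin p.2) =
      ∫ p in Set.Ioc (0:ℝ) t ×ˢ Set.Ioo (-π) π, p.1 * F (p.1 * cos p.2, p.1 * sin p.2) := by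
    apply setIntegral_eq_of_subset_of_forall_sdiff_eq_zero
      (measurableSet_Ioi.prod measurableSet_Ioo)
    · exact Set.prod_mono Set.Ioc_subset_Ioi_self le_rfl
    · rintro ⟨ρ, β⟩ ⟨hp, hn⟩
      have : t < ρ := by
        by_contra hc
        exact hn ⟨⟨hp.1, not_lt.1 hc⟩, hp.2⟩
      simp [h0 ρ β this]
  have h_integ : IntegrableOn (fun p : ℝ × ℝ => p.1 * F (p.1 * cos p.2, p.1 * sin p.2))
      (Set.Ioc (0:ℝ) t ×ˢ Set.Ioo (-π) π) (volume.prod volume) := by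
    have : IntegrableOn (fun p : ℝ × ℝ => p.1 * F (p.1 * cos p.2, p.1 * sin p.2))
      (Set.Icc (0:ℝ) t ×ˢ Set.Icc (-π) π) := hk.continuousOn.integrableOn_compact
        (isCompact_Icc.prod isCompact_Icc)
    exact this.mono_set (Set.prod_mono Set.Ioc_subset_Icc_self Set.Ioo_subset_Icc_self)
  rw [h1, h2, Measure.volume_eq_prod, setIntegral_prod _ h_integ,
    intervalIntegral.integral_of_le ht]
  congr 1
  ext ρ
  rw [intervalIntegral.integral_of_le hππ, integral_Ioc_eq_integral_Ioo]

/-- The hemisphere integral of a function lifted from the disc, in Cartesian coordinates, when the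
function is supported well inside the disc of radius `t` about `(r, 0)`. -/
theorem hemi_cart {G : ℝ × ℝ → ℝ} {R t r : ℝ} (hR : 1 ≤ R) (hr : 0 < r) (hs : 2 * R ≤ t - r)
    (hG : Continuous G) (sG : Supp R G) :
    hemi (fun γ β => cos γ * G (r - t * cos γ * cos β, t * cos γ * sin β)) =
      (1 / t) * ∫ y in box R, G y / √(t ^ 2 - ((r - y.1) ^ 2 + y.2 ^ 2)) := by
  have ht : 0 < t := by linarith
  have hR0 : 0 < R ^ 2 := by positivity
  set A : ℝ → ℝ := fun ρ => ∫ β in (-π)..π, G (r - ρ * cos β, ρ * sin β) with hA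
  have cA : Continuous A := cont_parint (fun ρ β => G (r - ρ * cos β, ρ * sin β)) _ _ (by fun_prop)
  have hG0 : ∀ ρ β, r + R < ρ → G (r - ρ * cos β, ρ * sin β) = 0 := by
    intro ρ β h
    apply sG
    have h1 : r * ρ * cos β ≤ r * ρ :=
      mul_le_of_le_one_right (mul_nonneg hr.le (by linarith)) (Real.cos_le_one β)
    have h2 : (r - ρ * cos β) ^ 2 + (ρ * sin β) ^ 2 = r ^ 2 - 2 * (r * ρ * cos β) + ρ ^ 2 := by
      linear_combination ρ ^ 2 * Real.sin_sq_add_cos_sq β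
    show R ^ 2 < (r - ρ * cos β) ^ 2 + (ρ * sin β) ^ 2
    rw [h2]
    nlinarith
  have hA0 : ∀ ρ, r + R < ρ → A ρ = 0 := by
    intro ρ h
    simp [hA, hG0 ρ _ h]
  set κ : ℝ → ℝ := fun w => (√(max (t ^ 2 - w) (R ^ 2)))⁻¹ with hκ
  have cκ : Continuous κ := by
    apply Continuous.inv₀ (by fun_prop)
    intro w
    exact (Real.sqrt_pos.2 (lt_of_lt_of_le hR0 (le_max_right _ _))).ne'
  -- on the support the cut-off in `κ` is not active
  have hin : ∀ w, w ≤ (r + R) ^ 2 → κ w = (√(t ^ 2 - w))⁻¹ := by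
    intro w hw
    have : R ^ 2 ≤ t ^ 2 - w := by nlinarith
    simp only [hκ]
    rw [max_eq_left this]
  have h1 : hemi (fun γ β => cos γ * G (r - t * cos γ * cos β, t * cos γ * sin β)) =
      ∫ γ in (0:ℝ)..(π / 2), cos γ * A (t * cos γ) := by
    unfold hemi
    simp only [intervalIntegral.integral_const_mul, hA]
  set h : ℝ → ℝ := fun ρ => ρ * A ρ * κ (ρ ^ 2) with hh
  have ch : Continuous h := by fun_prop
  have h2 : (∫ γ in (0:ℝ)..(π / 2), cos γ * A (t * cos γ)) =
      ∫ γ in (0:ℝ)..(π / 2), (-(1 / t)) * ((h ∘ fun γ => t * cos γ) γ * (t * -sin γ)) := by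
    apply intervalIntegral.integral_congr
    intro γ hγ
    rw [Set.uIcc_of_le (by positivity)] at hγ
    simp only [hh, Function.comp]
    have hc0 : 0 ≤ cos γ := Real.cos_nonneg_of_neg_pi_div_two_le_of_le
      (by linarith [hγ.1, Real.pi_pos]) hγ.2
    have hs0 : 0 ≤ sin γ := Real.sin_nonneg_of_nonneg_of_le_pi hγ.1
      (by linarith [hγ.2, Real.pi_pos])
    by_cases hρ : r + R < t * cos γ
    · rw [hA0 _ hρ]; ring
    · push Not at hρ
      have hρ0 : 0 ≤ t * cos γ := by positivity
      have e1 : t ^ 2 - (t * cos γ) ^ 2 = (t * sin γ) ^ 2 := by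
        linear_combination -t ^ 2 * Real.sin_sq_add_cos_sq γ
      have hw : (t * cos γ) ^ 2 ≤ (r + R) ^ 2 := by gcongr
      have hpos : 0 < (t * sin γ) ^ 2 := by rw [← e1]; nlinarith
      have hsne : sin γ ≠ 0 := by
        intro h; rw [h] at hpos; simp at hpos
      rw [hin _ hw, e1, Real.sqrt_sq (by positivity)]
      field_simp
  have h3 : (∫ γ in (0:ℝ)..(π / 2), (h ∘ fun γ => t * cos γ) γ * (t * -sin γ)) =
      ∫ ρ in (t * cos 0)..(t * cos (π / 2)), h ρ :=
    intervalIntegral.integral_comp_mul_deriv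
      (fun γ _ => (Real.hasDerivAt_cos γ).const_mul t) (by fun_prop) ch
  have h4 := polar_cont (F := fun z => G (r - z.1, z.2) * κ (z.1 ^ 2 + z.2 ^ 2)) ht.le
    (by fun_prop) (by
      intro ρ β hρ
      have := hG0 ρ β (by linarith)
      simp only [this, zero_mul])
  have h5 : (∫ ρ in (0:ℝ)..t, ∫ β in (-π)..π, ρ * (G (r - ρ * cos β, ρ * sin β) *
      κ ((ρ * cos β) ^ 2 + (ρ * sin β) ^ 2))) = ∫ ρ in (0:ℝ)..t, h ρ := by
    congr 1
    ext ρ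
    have e : ∀ β, ρ * (G (r - ρ * cos β, ρ * sin β) * κ ((ρ * cos β) ^ 2 + (ρ * sin β) ^ 2)) =
        ρ * κ (ρ ^ 2) * G (r - ρ * cos β, ρ * sin β) := by
      intro β
      have : (ρ * cos β) ^ 2 + (ρ * sin β) ^ 2 = ρ ^ 2 := by
        linear_combination ρ ^ 2 * Real.sin_sq_add_cos_sq β
      rw [this]; ring
    simp only [e, intervalIntegral.integral_const_mul, hh, hA]
    ring
  rw [h1, h2, intervalIntegral.integral_const_mul, h3, Real.cos_zero, Real.cos_pi_div_two,
    mul_one, mul_zero, intervalIntegral.integral_symm, ← h5, ← h4, integral_reflect r]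
  rw [neg_mul_neg]
  congr 1
  have hmem : ∀ y : ℝ × ℝ, y ∉ box R → G y = 0 := by
    intro y hy
    by_contra hne
    apply hy
    have hyR : y.1 ^ 2 + y.2 ^ 2 ≤ R ^ 2 := by
      by_contra hc
      exact hne (sG y (not_le.1 hc))
    have hR0' : 0 ≤ R := by linarith
    exact ⟨abs_le.1 (abs_le_of_sq_le_sq (by nlinarith [sq_nonneg y.2]) hR0'),
      abs_le.1 (abs_le_of_sq_le_sq (by nlinarith [sq_nonneg y.1]) hR0')⟩
  rw [← setIntegral_eq_integral_of_forall_compl_eq_zero (s := box R)]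
  · apply setIntegral_congr_fun (measurableSet_Icc.prod measurableSet_Icc)
    intro y _
    show G (r - (r - y.1), y.2) * κ ((r - y.1) ^ 2 + y.2 ^ 2) = _
    rw [sub_sub_cancel, Prod.mk.eta]
    by_cases hy : R ^ 2 < y.1 ^ 2 + y.2 ^ 2
    · simp [sG y hy]
    · push Not at hy
      have hy1 : |y.1| ≤ R := abs_le_of_sq_le_sq (by nlinarith [sq_nonneg y.2]) (by linarith)
      rw [hin _ (by nlinarith [(abs_le.1 hy1).1])]
      exact (div_eq_mul_inv _ _).symm
  · intro y hy
    simp only [sub_sub_cancel, Prod.mk.eta, hmem y hy, zero_mul]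

/-! ### The estimate inside the cone -/

section
variable {R K : ℝ} {f f1 f2 g : ℝ × ℝ → ℝ}

/-- The part of the source not carrying a factor `r` or `t`. -/
def ef (f f1 f2 : ℝ × ℝ → ℝ) (y : ℝ × ℝ) : ℝ := f y + y.1 * f1 y + y.2 * f2 y

/-- The solution inside the cone in Cartesian coordinates, with the source written as `hf` plus
terms of relative size `1/t` and `(t - r)/t`. -/
theorem Dat.Jf_cart (D : Dat R K f f1 f2 g) {t r : ℝ} (hr : 0 < r) (hs : 2 * R ≤ t - r) :
    √r * Jf f f1 f2 g t r = (1 / (2 * π)) * ∫ y in box R,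
      √r / √(t ^ 2 - ((r - y.1) ^ 2 + y.2 ^ 2)) *
        (ef f f1 f2 y / t + (t - r) / t * f1 y + hf f1 g y) := by
  have hR := D.hR
  have ht : 0 < t := by linarith
  have h1 := D.cf; have h2 := D.cf1; have h3 := D.cf2; have h4 := D.cg
  set G : ℝ × ℝ → ℝ := fun y => f y + (y.1 - r) * f1 y + y.2 * f2 y + t * g y with hG
  have cG : Continuous G := by fun_prop
  have sG : Supp R G := by
    intro p hp
    simp [hG, D.sf p hp, D.sf1 p hp, D.sf2 p hp, D.sg p hp]
  have e : kir f f1 f2 g t r =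
      fun γ β => cos γ * G (r - t * cos γ * cos β, t * cos γ * sin β) := by
    ext γ β
    simp only [kir, hG]
    ring
  rw [Jf, e, hemi_cart hR hr hs cG sG, mul_left_comm, ← mul_assoc (√r), ← integral_const_mul]
  congr 2
  ext y
  simp only [hG, ef, hf]
  field_simp
  ring

/-- The limiting field inside the cone in Cartesian coordinates. -/
theorem Dat.R2_far (D : Dat R K f f1 f2 g) {t r : ℝ} (hs : 2 * R ≤ t - r) :
    R2 (fun a b => hf f1 g (a, b)) (r - t) 1 0 = (1 / (2 * π)) * ∫ y in box R,
      1 / √(2 * (t - r + y.1)) * hf f1 g y := by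
  have hR := D.hR
  have e : r - t = -(t - r) := by ring
  rw [e, R2_box (by linarith) D.hf_supp D.hf_cont hs]
  have e2 : 1 / (2 * √2 * π) = 1 / (2 * π) * (1 / √2) := by field_simp
  rw [e2, mul_assoc, ← integral_const_mul]
  congr 2
  ext y
  rw [Real.sqrt_mul (by norm_num)]
  ring

/-- Pointwise bound for the difference of the two integrands, after subtracting multiples of the
mean-free functions `f1` and `hf`. -/
theorem Dat.far_pt (D : Dat R K f f1 f2 g) {t r : ℝ} (hr : 0 < r) (hs : 2 * R ≤ t - r)
    (y : ℝ × ℝ) :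
    |√r / √(t ^ 2 - ((r - y.1) ^ 2 + y.2 ^ 2)) *
        (ef f f1 f2 y / t + (t - r) / t * f1 y + hf f1 g y) - 1 / √(2 * (t - r + y.1)) * hf f1 g y
      - (√r / √(t ^ 2 - r ^ 2) * ((t - r) / t) * f1 y +
        (√r / √(t ^ 2 - r ^ 2) - 1 / √(2 * (t - r))) * hf f1 g y)| ≤
      106 * K * R / (t * √(t - r)) := by
  have hR := D.hR
  have hK := D.hK
  have hs0 : 0 < t - r := by linarith
  have ht : 0 < t := by linarith
  by_cases hy : R ^ 2 < y.1 ^ 2 + y.2 ^ 2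
  · have e : ef f f1 f2 y = 0 := by simp [ef, D.sf y hy, D.sf1 y hy, D.sf2 y hy]
    rw [e, D.sf1 y hy, D.hf_supp y hy]
    simp only [zero_div, mul_zero, add_zero, sub_zero, abs_zero]
    positivity
  · push Not at hy
    have hy1 : |y.1| ≤ R := abs_le_of_sq_le_sq (by nlinarith [sq_nonneg y.2]) (by linarith)
    have hy2 : |y.2| ≤ R := abs_le_of_sq_le_sq (by nlinarith [sq_nonneg y.1]) (by linarith)
    obtain ⟨b1, b2, b3⟩ := far_kernel (t := t) (Q := t ^ 2 - ((r - y.1) ^ 2 + y.2 ^ 2))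
      (Q0 := t ^ 2 - r ^ 2) hR hr hs (by ring) hy (by ring) (by ring)
    set m := √r / √(t ^ 2 - ((r - y.1) ^ 2 + y.2 ^ 2))
    set m0 := √r / √(t ^ 2 - r ^ 2)
    set d := 1 / √(2 * (t - r + y.1))
    set d0 := 1 / √(2 * (t - r))
    set s := t - r
    have hσ : 0 < √s := Real.sqrt_pos.2 hs0
    have he : |ef f f1 f2 y| ≤ 3 * K * R := by
      unfold ef
      calc _ ≤ |f y| + |y.1| * |f1 y| + |y.2| * |f2 y| := by
            rw [← abs_mul, ← abs_mul]
            exact (abs_add_le _ _).trans (add_le_add (abs_add_le _ _) le_rfl)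
        _ ≤ K + R * K + R * K := by
            gcongr
            exacts [D.bf y, D.bf1 y, D.bf2 y]
        _ ≤ _ := by nlinarith
    have e : m * (ef f f1 f2 y / t + s / t * f1 y + hf f1 g y) - d * hf f1 g y -
        (m0 * (s / t) * f1 y + (m0 - d0) * hf f1 g y) =
        m * ef f f1 f2 y / t + (m - m0) * f1 y * s / t + ((m - d) - (m0 - d0)) * hf f1 g y := by
      ring
    have t1 : |m * ef f f1 f2 y / t| ≤ 2 / √s * (3 * K * R) / t := by
      rw [abs_div, abs_mul, abs_of_pos ht]; gcongr
    have t2 : |(m - m0) * f1 y * s / t| ≤ 4 * R / (s * √s) * K * s / t := by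
      rw [abs_div, abs_mul, abs_mul, abs_of_pos ht, abs_of_pos hs0]
      gcongr
      exact D.bf1 y
    have t3 : |((m - d) - (m0 - d0)) * hf f1 g y| ≤ 48 * R / (t * √s) * (2 * K) := by
      rw [abs_mul]
      exact mul_le_mul b3 (D.hf_bd y) (abs_nonneg _) (by positivity)
    rw [e]
    calc _ ≤ 2 / √s * (3 * K * R) / t + 4 * R / (s * √s) * K * s / t +
          48 * R / (t * √s) * (2 * K) :=
          (abs_add_le _ _).trans (add_le_add ((abs_add_le _ _).trans (add_le_add t1 t2)) t3)
      _ = _ := by field_simp; norm_num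

/-- The estimate inside the cone. Since `f1` and `g` have mean zero, constants may be subtracted
from the kernels without changing the integrals. -/
theorem Dat.far (D : Dat R K f f1 f2 g) {t r : ℝ} (hr : 0 < r) (hs : 2 * R ≤ t - r) :
    |√r * Jf f f1 f2 g t r - R2 (fun a b => hf f1 g (a, b)) (r - t) 1 0| ≤
      424 * K * R ^ 3 / (t * √(t - r)) := by
  have hR := D.hR
  have hK := D.hK
  have hR0 : 0 ≤ R := by linarith
  have hs0 : 0 < t - r := by linarith
  have ht : 0 < t := by linarith
  have cf := D.cf; have cf1 := D.cf1; have cf2 := D.cf2; have ch := D.hf_cont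
  have cbox : IsCompact (box R) := isCompact_Icc.prod isCompact_Icc
  have ce : Continuous (ef f f1 f2) := by unfold ef; fun_prop
  set F1 : ℝ × ℝ → ℝ := fun y => √r / √(t ^ 2 - ((r - y.1) ^ 2 + y.2 ^ 2)) *
        (ef f f1 f2 y / t + (t - r) / t * f1 y + hf f1 g y) with hF1
  set F2 : ℝ × ℝ → ℝ := fun y => 1 / √(2 * (t - r + y.1)) * hf f1 g y with hF2
  -- the subtracted terms: the kernels are frozen at the origin, and the integral of `F3` is zero
  set F3 : ℝ × ℝ → ℝ := fun y => √r / √(t ^ 2 - r ^ 2) * ((t - r) / t) * f1 y +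
        (√r / √(t ^ 2 - r ^ 2) - 1 / √(2 * (t - r))) * hf f1 g y with hF3
  have c1 : ContinuousOn F1 (box R) := by
    refine ContinuousOn.mul (ContinuousOn.div (by fun_prop) (by fun_prop) ?_) (by fun_prop)
    intro y hy
    have h1 : -R ≤ y.1 := hy.1.1
    have h2 : y.1 ≤ R := hy.1.2
    have h3 : -R ≤ y.2 := hy.2.1
    have h4 : y.2 ≤ R := hy.2.2
    have h5 : y.1 ^ 2 ≤ R ^ 2 := by nlinarith
    have h6 : y.2 ^ 2 ≤ R ^ 2 := by nlinarith
    have h7 : (2 * R) ^ 2 ≤ (t - r) ^ 2 := by gcongr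
    have h8 : 0 < r * (t - r + y.1) := mul_pos hr (by linarith)
    exact (Real.sqrt_pos.2 (by nlinarith)).ne'
  have c2 : ContinuousOn F2 (box R) := by
    refine ContinuousOn.mul (ContinuousOn.div (by fun_prop) (by fun_prop) ?_) (by fun_prop)
    intro y hy
    have h1 : -R ≤ y.1 := hy.1.1
    exact (Real.sqrt_pos.2 (by linarith)).ne'
  have c3 : Continuous F3 := by fun_prop
  have i1 := c1.integrableOn_compact (μ := volume) cbox
  have i2 := c2.integrableOn_compact (μ := volume) cbox
  have i3 : IntegrableOn F3 (box R) := c3.continuousOn.integrableOn_compact cbox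
  have if1 : IntegrableOn f1 (box R) := cf1.continuousOn.integrableOn_compact cbox
  have ih : IntegrableOn (hf f1 g) (box R) := ch.continuousOn.integrableOn_compact cbox
  have ig : IntegrableOn g (box R) := D.cg.continuousOn.integrableOn_compact cbox
  have z1 : ∫ y in box R, hf f1 g y = 0 := by
    unfold hf
    rw [integral_sub ig if1, D.ig, D.if1, sub_zero]
  have z3 : ∫ y in box R, F3 y = 0 := by
    rw [hF3, integral_add (if1.const_mul _) (ih.const_mul _), integral_const_mul,
      integral_const_mul, D.if1, z1]
    ring
  have e : √r * Jf f f1 f2 g t r - R2 (fun a b => hf f1 g (a, b)) (r - t) 1 0 =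
      (1 / (2 * π)) * ∫ y in box R, (F1 y - F2 y - F3 y) := by
    have h12 : IntegrableOn (fun y => F1 y - F2 y) (box R) := i1.sub i2
    rw [D.Jf_cart hr hs, D.R2_far hs, integral_sub h12 i3, integral_sub i1 i2, z3]
    ring
  have hb : |∫ y in box R, (F1 y - F2 y - F3 y)| ≤
      106 * K * R / (t * √(t - r)) * (R - -R) * (R - -R) := by
    have c4 : ContinuousOn (fun y => F1 y - F2 y - F3 y) (box R) :=
      (c1.sub c2).sub c3.continuousOn
    rw [box_eq hR0 c4]
    have hRR : -R ≤ R := by linarith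
    exact int_bound hRR (fun a _ _ => int_bound hRR (fun b _ _ => D.far_pt hr hs (a, b)))
  have hσ : 0 < √(t - r) := Real.sqrt_pos.2 hs0
  have hpi : 1 / (2 * π) ≤ 1 := by
    rw [div_le_one (by positivity)]; linarith [Real.pi_gt_three]
  rw [e, abs_mul, abs_of_pos (by positivity)]
  calc _ ≤ 1 * (106 * K * R / (t * √(t - r)) * (R - -R) * (R - -R)) := by gcongr
    _ = _ := by ring

/-- Main estimate for data of class `Dat`, in the direction `(1, 0)`. -/
theorem Dat.core (D : Dat R K f f1 f2 g) {t r : ℝ} (ht0 : 0 ≤ t) (hr0 : 0 < r) :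
    |√r * Jf f f1 f2 g t r - R2 (fun a b => hf f1 g (a, b)) (r - t) 1 0| ≤
      5000000 * K * R ^ 7 * Wt t r := by
  have hR := D.hR
  have hK := D.hK
  by_cases hs : t - r ≤ 2 * R
  · exact D.core_near ht0 hr0 hs
  · push Not at hs
    have hs0 : 0 < t - r := by linarith
    have ht : 0 < t := by linarith
    have hσ : 0 < √(t - r) := Real.sqrt_pos.2 hs0
    apply le_Wt (by positivity) ht0 hr0.le
    have h1 : √(1 + |t - r|) ≤ 2 * √(t - r) := by
      rw [abs_of_pos hs0, Real.sqrt_le_left (by positivity), mul_pow, Real.sq_sqrt hs0.le]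
      linarith
    have h2 : 1 + t + r ≤ 3 * t := by linarith
    calc _ ≤ 424 * K * R ^ 3 / (t * √(t - r)) * (3 * t * (2 * √(t - r))) := by
          gcongr
          exact D.far hr0 hs.le
      _ = 2544 * (K * R ^ 3) := by field_simp; ring
      _ ≤ 2544 * (K * R ^ 7) := by gcongr <;> norm_num
      _ ≤ _ := by
        have : 0 ≤ K * R ^ 7 := by positivity
        linarith
end

/-! ### Test functions: bounds, rotations, mean values -/

/-- Bounds by `K` on all iterated derivatives of order at most `n` in directions of Euclidean length
at most one. The Euclidean length is used because it makes the notion rotation invariant. -/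
def BD (K : ℝ) : ℕ → (ℝ × ℝ → ℝ) → Prop
  | 0, ψ => ∀ p, |ψ p| ≤ K
  | n + 1, ψ => (∀ p, |ψ p| ≤ K) ∧ ∀ v : ℝ × ℝ, v.1 ^ 2 + v.2 ^ 2 ≤ 1 → BD K n (dd v ψ)

/-- Test functions supported in the disc of radius `R` whose derivatives up to order `n` are
bounded by `K`. -/
structure Nice (n : ℕ) (R K : ℝ) (ψ : ℝ × ℝ → ℝ) : Prop where
  smooth : ContDiff ℝ (⊤ : ℕ∞) ψ
  supp : Supp R ψ
  bd : BD K n ψ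

section
variable {n : ℕ} {R K : ℝ} {ψ : ℝ × ℝ → ℝ}

theorem BD.bound (h : BD K n ψ) : ∀ p, |ψ p| ≤ K := by
  cases n with
  | zero => exact h
  | succ n => exact h.1

theorem BD.mono {K' : ℝ} (hK : K ≤ K') : ∀ {n : ℕ} {ψ : ℝ × ℝ → ℝ}, BD K n ψ → BD K' n ψ := by
  intro n
  induction n with
  | zero => intro ψ h p; exact (h p).trans hK
  | succ n ih => intro ψ h; exact ⟨fun p => (h.1 p).trans hK, fun v hv => ih (h.2 v hv)⟩

theorem BD.add {K1 K2 α β : ℝ} (hα : |α| ≤ 1) (hβ : |β| ≤ 1) :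
    ∀ {n : ℕ} {X Y : ℝ × ℝ → ℝ}, ContDiff ℝ (⊤ : ℕ∞) X → ContDiff ℝ (⊤ : ℕ∞) Y → BD K1 n X →
      BD K2 n Y → BD (K1 + K2) n (fun p => α * X p + β * Y p) := by
  have base : ∀ {X Y : ℝ × ℝ → ℝ}, (∀ p, |X p| ≤ K1) → (∀ p, |Y p| ≤ K2) →
      ∀ p, |α * X p + β * Y p| ≤ K1 + K2 := by
    intro X Y hX hY p
    refine (abs_add_le _ _).trans (add_le_add ?_ ?_)
    · rw [abs_mul]
      exact (mul_le_of_le_one_left (abs_nonneg _) hα).trans (hX p)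
    · rw [abs_mul]
      exact (mul_le_of_le_one_left (abs_nonneg _) hβ).trans (hY p)
  intro n
  induction n with
  | zero => intro X Y _ _ hX hY; exact base hX hY
  | succ n ih =>
    intro X Y sX sY hX hY
    refine ⟨base hX.1 hY.1, fun v hv => ?_⟩
    rw [dd_add sX sY]
    exact ih (dd_smooth sX v) (dd_smooth sY v) (hX.2 v hv) (hY.2 v hv)

theorem BD.exists (hR : 0 ≤ R) : ∀ (n : ℕ) {ψ : ℝ × ℝ → ℝ}, ContDiff ℝ (⊤ : ℕ∞) ψ → Supp R ψ →
    ∃ K, 0 ≤ K ∧ BD K n ψ := by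
  have base : ∀ {ψ : ℝ × ℝ → ℝ}, ContDiff ℝ (⊤ : ℕ∞) ψ → Supp R ψ →
      ∃ K, 0 ≤ K ∧ ∀ p, |ψ p| ≤ K := by
    intro ψ hψ hs
    have hc : IsCompact (Set.Icc (-R) R ×ˢ Set.Icc (-R) R) := isCompact_Icc.prod isCompact_Icc
    obtain ⟨C, hC⟩ := hc.exists_bound_of_continuousOn hψ.continuous.continuousOn
    refine ⟨max C 0, le_max_right _ _, fun p => ?_⟩
    by_cases hp : p ∈ Set.Icc (-R) R ×ˢ Set.Icc (-R) R
    · exact (hC p hp).trans (le_max_left _ _)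
    · have : ψ p = 0 := by
        rw [Set.mem_prod, not_and_or] at hp
        rcases hp with hp | hp
        · exact hs.left (a := p.1) (b := p.2)
            (not_le.1 fun h => hp (Set.mem_Icc.2 (abs_le.1 h))) hR
        · exact hs.right (a := p.1) (b := p.2)
            (not_le.1 fun h => hp (Set.mem_Icc.2 (abs_le.1 h))) hR
      rw [this, abs_zero]; exact le_max_right _ _
  intro n
  induction n with
  | zero => intro ψ h1 h2; exact base h1 h2
  | succ n ih =>
    intro ψ hψ hs
    obtain ⟨K0, h0, b0⟩ := base hψ hs
    obtain ⟨K1, h1, b1⟩ := ih (dd_smooth hψ (1, 0)) (hs.dd (1, 0))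
    obtain ⟨K2, h2, b2⟩ := ih (dd_smooth hψ (0, 1)) (hs.dd (0, 1))
    refine ⟨K0 + (K1 + K2), by positivity, fun p => (b0 p).trans (by linarith), fun v hv => ?_⟩
    have e : v = v.1 • ((1, 0) : ℝ × ℝ) + v.2 • ((0, 1) : ℝ × ℝ) := by ext <;> simp
    rw [e, dd_lin]
    refine BD.mono (by linarith) (BD.add ?_ ?_ (dd_smooth hψ (1, 0)) (dd_smooth hψ (0, 1)) b1 b2)
    · rw [abs_le_one_iff_mul_self_le_one]; nlinarith [sq_nonneg v.2]
    · rw [abs_le_one_iff_mul_self_le_one]; nlinarith [sq_nonneg v.1]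

/-- The rotation of the plane taking `(1, 0)` to `(a, b)`. -/
def rotL (a b : ℝ) : ℝ × ℝ →L[ℝ] ℝ × ℝ :=
  (a • ContinuousLinearMap.fst ℝ ℝ ℝ - b • ContinuousLinearMap.snd ℝ ℝ ℝ).prod
    (b • ContinuousLinearMap.fst ℝ ℝ ℝ + a • ContinuousLinearMap.snd ℝ ℝ ℝ)

theorem rotL_apply (a b : ℝ) (p : ℝ × ℝ) :
    rotL a b p = (a * p.1 - b * p.2, b * p.1 + a * p.2) := by
  simp [rotL]

theorem rotL_sq {a b : ℝ} (hab : a ^ 2 + b ^ 2 = 1) (p : ℝ × ℝ) :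
    (rotL a b p).1 ^ 2 + (rotL a b p).2 ^ 2 = p.1 ^ 2 + p.2 ^ 2 := by
  rw [rotL_apply]
  linear_combination (p.1 ^ 2 + p.2 ^ 2) * hab

theorem BD.rot {a b : ℝ} (hab : a ^ 2 + b ^ 2 = 1) : ∀ {n : ℕ} {ψ : ℝ × ℝ → ℝ},
    ContDiff ℝ (⊤ : ℕ∞) ψ → BD K n ψ → BD K n (fun p => ψ (rotL a b p)) := by
  intro n
  induction n with
  | zero => intro ψ _ h p; exact h _
  | succ n ih =>
    intro ψ hψ h
    refine ⟨fun p => h.1 _, fun v hv => ?_⟩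
    rw [dd_comp hψ]
    exact ih (dd_smooth hψ _) (h.2 _ (by rwa [rotL_sq hab]))

theorem Nice.rot {a b : ℝ} (hab : a ^ 2 + b ^ 2 = 1) (h : Nice n R K ψ) :
    Nice n R K (fun p => ψ (rotL a b p)) :=
  ⟨h.smooth.comp (rotL a b).contDiff, fun p hp => h.supp _ (by rwa [rotL_sq hab]),
    h.bd.rot hab h.smooth⟩

theorem Nice.dd (h : Nice (n + 1) R K ψ) {v : ℝ × ℝ} (hv : v.1 ^ 2 + v.2 ^ 2 ≤ 1) :
    Nice n R K (dd v ψ) :=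
  ⟨dd_smooth h.smooth v, h.supp.dd v, h.bd.2 v hv⟩

theorem Nice.add {Y : ℝ × ℝ → ℝ} (h : Nice n R K ψ) (k : Nice n R K Y) :
    Nice n R (2 * K) (fun p => ψ p + Y p) := by
  refine ⟨h.smooth.add k.smooth, fun p hp => by rw [h.supp p hp, k.supp p hp, add_zero], ?_⟩
  have := BD.add (α := 1) (β := 1) (by simp) (by simp) h.smooth k.smooth h.bd k.bd
  simp only [one_mul] at this
  rwa [two_mul]

/-- The Lipschitz bound in the form needed for `Dat`. -/
theorem Nice.lip (h : Nice (n + 1) R K ψ) (a b c d : ℝ) :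
    |ψ (a, b) - ψ (c, d)| ≤ K * (|a - c| + |b - d|) := by
  have h1 : |ψ (a, b) - ψ (c, b)| ≤ K * |a - c| := by
    have := Convex.norm_image_sub_le_of_norm_hasDerivWithin_le (f := fun s => ψ (s, b))
      (f' := fun s => _root_.dd (1, 0) ψ (s, b)) (C := K) (s := Set.univ) (x := c) (y := a)
      (fun s _ => (dd_curve h.smooth (c := fun s => (s, b))
        ((hasDerivAt_id s).prodMk (hasDerivAt_const s b))).hasDerivWithinAt)
      (fun s _ => (h.bd.2 (1, 0) (by simp)).bound _) convex_univ trivial trivial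
    simpa using this
  have h2 : |ψ (c, b) - ψ (c, d)| ≤ K * |b - d| := by
    have := Convex.norm_image_sub_le_of_norm_hasDerivWithin_le (f := fun s => ψ (c, s))
      (f' := fun s => _root_.dd (0, 1) ψ (c, s)) (C := K) (s := Set.univ) (x := d) (y := b)
      (fun s _ => (dd_curve h.smooth (c := fun s => (c, s))
        ((hasDerivAt_const s c).prodMk (hasDerivAt_id s))).hasDerivWithinAt)
      (fun s _ => (h.bd.2 (0, 1) (by simp)).bound _) convex_univ trivial trivial
    simpa using this
  have := abs_sub_le (ψ (a, b)) (ψ (c, b)) (ψ (c, d))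
  linarith

theorem Nice.cont (h : Nice n R K ψ) : Continuous ψ := h.smooth.continuous

theorem Supp.edge1 (hR : 0 < R) (hs : Supp R ψ) (hc : Continuous ψ) {a : ℝ} (ha : |a| = R)
    (b : ℝ) : ψ (a, b) = 0 := by
  -- `ψ` vanishes at `(s * a, b)` for `s > 1`; let `s → 1`.
  have hc' : Continuous fun s : ℝ => ψ (s * a, b) := by fun_prop
  have hcl : IsClosed {s : ℝ | ψ (s * a, b) = 0} := isClosed_eq hc' continuous_const
  have hsub : Set.Ioi (1:ℝ) ⊆ {s : ℝ | ψ (s * a, b) = 0} := by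
    intro s hs1
    have hs1 : 1 < s := hs1
    refine hs.left ?_ hR.le
    rw [abs_mul, ha, abs_of_pos (by linarith)]
    nlinarith
  have := hcl.closure_subset_iff.2 hsub (by simp : (1:ℝ) ∈ closure (Set.Ioi 1))
  simpa using this

theorem Supp.edge2 (hR : 0 < R) (hs : Supp R ψ) (hc : Continuous ψ) {b : ℝ} (hb : |b| = R)
    (a : ℝ) : ψ (a, b) = 0 := by
  have hc' : Continuous fun s : ℝ => ψ (a, s * b) := by fun_prop
  have hcl : IsClosed {s : ℝ | ψ (a, s * b) = 0} := isClosed_eq hc' continuous_const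
  have hsub : Set.Ioi (1:ℝ) ⊆ {s : ℝ | ψ (a, s * b) = 0} := by
    intro s hs1
    have hs1 : 1 < s := hs1
    refine hs.right ?_ hR.le
    rw [abs_mul, hb, abs_of_pos (by linarith)]
    nlinarith
  have := hcl.closure_subset_iff.2 hsub (by simp : (1:ℝ) ∈ closure (Set.Ioi 1))
  simpa using this

/-- Derivatives of test functions have mean zero. -/
theorem Supp.mean1 (hR : 0 < R) (hs : Supp R ψ) (hψ : ContDiff ℝ (⊤ : ℕ∞) ψ) :
    ∫ y in box R, _root_.dd (1, 0) ψ y = 0 := by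
  have c1 := (dd_smooth hψ (1, 0)).continuous
  have hRR : -R ≤ R := by linarith
  rw [box_eq hR.le c1.continuousOn,
    swap_parint (fun a b => _root_.dd (1, 0) ψ (a, b)) hRR hRR (by exact c1)]
  have : ∀ b, ∫ a in -R..R, _root_.dd (1, 0) ψ (a, b) = 0 := by
    intro b
    rw [intervalIntegral.integral_eq_sub_of_hasDerivAt (f := fun s => ψ (s, b))
      (fun s _ => dd_curve hψ (c := fun s => (s, b))
        ((hasDerivAt_id s).prodMk (hasDerivAt_const s b)))
      ((by fun_prop : Continuous fun s => _root_.dd (1, 0) ψ (s, b)).intervalIntegrable _ _)]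
    rw [hs.edge1 hR hψ.continuous (abs_of_pos hR),
      hs.edge1 hR hψ.continuous (by rw [abs_neg, abs_of_pos hR]), sub_zero]
  simp [this]

/-- See `Supp.mean1`. -/
theorem Supp.mean2 (hR : 0 < R) (hs : Supp R ψ) (hψ : ContDiff ℝ (⊤ : ℕ∞) ψ) :
    ∫ y in box R, _root_.dd (0, 1) ψ y = 0 := by
  have c1 := (dd_smooth hψ (0, 1)).continuous
  rw [box_eq hR.le c1.continuousOn]
  have : ∀ a, ∫ b in -R..R, _root_.dd (0, 1) ψ (a, b) = 0 := by
    intro a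
    rw [intervalIntegral.integral_eq_sub_of_hasDerivAt (f := fun s => ψ (a, s))
      (fun s _ => dd_curve hψ (c := fun s => (a, s))
        ((hasDerivAt_const s a).prodMk (hasDerivAt_id s)))
      ((by fun_prop : Continuous fun s => _root_.dd (0, 1) ψ (a, s)).intervalIntegrable _ _)]
    rw [hs.edge2 hR hψ.continuous (abs_of_pos hR),
      hs.edge2 hR hψ.continuous (by rw [abs_neg, abs_of_pos hR]), sub_zero]
  simp [this]

theorem integrableOn_box (hc : Continuous ψ) : IntegrableOn ψ (box R) :=
  hc.continuousOn.integrableOn_compact (isCompact_Icc.prod isCompact_Icc)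

end

/-! ### Asymptotics on the positive `x₁`-axis -/

theorem restrict_dd {U : ℝ × ℝ × ℝ → ℝ} (hU : ContDiff ℝ (⊤ : ℕ∞) U) (v : ℝ × ℝ) :
    (fun p => dd ((0, v) : ℝ × ℝ × ℝ) U (0, p)) = dd v (fun p => U (0, p)) :=
  (dd_comp hU (ContinuousLinearMap.inr ℝ ℝ (ℝ × ℝ)) v).symm

theorem WaveEq.dd {V : ℝ × ℝ × ℝ → ℝ} (hV : ContDiff ℝ (⊤ : ℕ∞) V) (hw : WaveEq V)
    (v : ℝ × ℝ × ℝ) : WaveEq (dd v V) := by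
  intro p hp
  have ho : IsOpen {p : ℝ × ℝ × ℝ | 0 < p.1} := isOpen_lt (by fun_prop) (by fun_prop)
  have e : ∀ w, _root_.dd w (_root_.dd w (_root_.dd v V)) =
      _root_.dd v (_root_.dd w (_root_.dd w V)) := by
    intro w
    rw [dd_comm hV w v, dd_comm (dd_smooth hV w) w v]
  rw [e, e, e]
  have := dd_congr ho (U := _root_.dd ve0 (_root_.dd ve0 V)) (V := fun p => 1 * _root_.dd ve1 (_root_.dd ve1 V) p +
    1 * _root_.dd ve2 (_root_.dd ve2 V) p)
    (fun q hq => by rw [one_mul, one_mul]; exact hw q hq) v p hp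
  rw [this, dd_add (dd_smooth (dd_smooth hV _) _) (dd_smooth (dd_smooth hV _) _)]
  ring

/-- The equation is assumed for positive times only; it extends to `t = 0` by continuity. -/
theorem WaveEq.zero {V : ℝ × ℝ × ℝ → ℝ} (hV : ContDiff ℝ (⊤ : ℕ∞) V) (hw : WaveEq V) (q : ℝ × ℝ) :
    _root_.dd ve0 (_root_.dd ve0 V) (0, q) =
      _root_.dd ve1 (_root_.dd ve1 V) (0, q) + _root_.dd ve2 (_root_.dd ve2 V) (0, q) := by
  have c0 := (dd_smooth (dd_smooth hV ve0) ve0).continuous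
  have c1 := (dd_smooth (dd_smooth hV ve1) ve1).continuous
  have c2 := (dd_smooth (dd_smooth hV ve2) ve2).continuous
  have hcl : IsClosed {s : ℝ | _root_.dd ve0 (_root_.dd ve0 V) (s, q) =
      _root_.dd ve1 (_root_.dd ve1 V) (s, q) + _root_.dd ve2 (_root_.dd ve2 V) (s, q)} :=
    isClosed_eq (by fun_prop) (by fun_prop)
  have hsub : Set.Ioi (0:ℝ) ⊆ {s : ℝ | _root_.dd ve0 (_root_.dd ve0 V) (s, q) =
      _root_.dd ve1 (_root_.dd ve1 V) (s, q) + _root_.dd ve2 (_root_.dd ve2 V) (s, q)} :=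
    fun s hs => hw (s, q) hs
  exact hcl.closure_subset_iff.2 hsub (by simp : (0:ℝ) ∈ closure (Set.Ioi 0))

/-- `rep_formula` in terms of `Jf`, for a wave with initial position `f` and velocity `g`. -/
theorem eq_Jf {U : ℝ × ℝ × ℝ → ℝ} (hU : ContDiff ℝ (⊤ : ℕ∞) U) (hw : WaveEq U)
    {f g : ℝ × ℝ → ℝ} (hf : (fun p => U (0, p)) = f) (hg : (fun p => dd ve0 U (0, p)) = g)
    {t : ℝ} (ht : 0 ≤ t) (r : ℝ) :
    U (t, r, 0) = Jf f (dd (1, 0) f) (dd (0, 1) f) g t r := by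
  have h := rep_formula hU hw t r ht
  have e1 : (fun p => dd ve1 U (0, p)) = dd (1, 0) f := by
    rw [← hf]; exact restrict_dd hU (1, 0)
  have e2 : (fun p => dd ve2 U (0, p)) = dd (0, 1) f := by
    rw [← hf]; exact restrict_dd hU (0, 1)
  rw [hf, hg, e1, e2] at h
  rw [Jf, ← h]
  field_simp

section
variable {R K : ℝ} {ψ0 ψ1 : ℝ × ℝ → ℝ}

theorem unit1 : ((1, 0) : ℝ × ℝ).1 ^ 2 + ((1, 0) : ℝ × ℝ).2 ^ 2 ≤ 1 := by norm_num
theorem unit2 : ((0, 1) : ℝ × ℝ).1 ^ 2 + ((0, 1) : ℝ × ℝ).2 ^ 2 ≤ 1 := by norm_num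

/-- A wave with test functions as initial position and velocity, the velocity having mean zero, has
data of class `Dat`. -/
theorem mkDat {f g : ℝ × ℝ → ℝ} (hR : 1 ≤ R) (hK : 0 ≤ K) (hf : Nice 2 R K f) (hg : Nice 1 R K g)
    (ig : ∫ y in box R, g y = 0) : Dat R K f (dd (1, 0) f) (dd (0, 1) f) g where
  hR := hR
  hK := hK
  cf := hf.cont
  cf1 := (hf.dd unit1).cont
  cf2 := (hf.dd unit2).cont
  cg := hg.cont
  sf := hf.supp
  sf1 := (hf.dd unit1).supp
  sf2 := (hf.dd unit2).supp
  sg := hg.supp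
  bf := hf.bd.bound
  bf1 := (hf.dd unit1).bd.bound
  bf2 := (hf.dd unit2).bd.bound
  bg := hg.bd.bound
  lf1 := (hf.dd unit1).lip
  lg := hg.lip
  if1 := hf.supp.mean1 (by linarith) hf.smooth
  ig := ig

theorem Nice.le {n m : ℕ} (hm : m ≤ n) {ψ : ℝ × ℝ → ℝ} (h : Nice n R K ψ) : Nice m R K ψ := by
  refine ⟨h.smooth, h.supp, ?_⟩
  have : ∀ {m n : ℕ} {ψ : ℝ × ℝ → ℝ}, m ≤ n → BD K n ψ → BD K m ψ := by
    intro m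
    induction m with
    | zero => intro n ψ _ h; exact h.bound
    | succ m ih =>
      intro n ψ hmn h
      cases n with
      | zero => omega
      | succ n => exact ⟨h.1, fun v hv => ih (by omega) (h.2 v hv)⟩
  exact this hm h.bd

theorem Nice.mono {n : ℕ} {K' : ℝ} (hK : K ≤ K') {ψ : ℝ × ℝ → ℝ} (h : Nice n R K ψ) :
    Nice n R K' ψ := ⟨h.smooth, h.supp, h.bd.mono hK⟩

/-- The radiation field of the data in the direction `(1, 0)`, with the `σ`-derivatives carried
under the integral. -/
theorem dF0_eq (hR : 0 ≤ R) (h0 : Nice 3 R K ψ0) (h1 : Nice 3 R K ψ1) (σ : ℝ) :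
    dF0 (fun a b => ψ0 (a, b)) (fun a b => ψ1 (a, b)) σ 1 0 =
      -R2 (fun a b => dd (1, 0) (dd (1, 0) ψ0) (a, b)) σ 1 0
        + R2 (fun a b => dd (1, 0) ψ1 (a, b)) σ 1 0 := by
  have e : (fun σ' => F0 (fun a b => ψ0 (a, b)) (fun a b => ψ1 (a, b)) σ' 1 0) =
      fun σ => -R2 (fun a b => dd (1, 0) ψ0 (a, b)) σ 1 0 + R2 (fun a b => ψ1 (a, b)) σ 1 0 := by
    ext s
    rw [F0, (R2_hasDerivAt hR h0.supp h0.smooth s).deriv]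
  rw [dF0, e]
  exact ((R2_hasDerivAt hR (h0.supp.dd _) (dd_smooth h0.smooth _) σ).neg.add
    (R2_hasDerivAt hR h1.supp h1.smooth σ)).deriv

theorem R2_hf (hR : 0 ≤ R) {f g : ℝ × ℝ → ℝ} (sf : Supp R f) (sg : Supp R g)
    (cf : Continuous f) (cg : Continuous g) (σ : ℝ) :
    R2 (fun a b => hf f g (a, b)) σ 1 0 =
      R2 (fun a b => g (a, b)) σ 1 0 - R2 (fun a b => f (a, b)) σ 1 0 := by
  have := R2_lin hR sg sf cg cf 1 (-1) σ
  have e : (fun x y => hf f g (x, y)) = fun x y => 1 * g (x, y) + (-1) * f (x, y) := by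
    ext x y; simp only [hf]; ring
  rw [e, this]; ring

/-- The asymptotics of the first derivatives of a free wave on the positive `x₁`-axis. -/
theorem axis_asymptotics {V : ℝ × ℝ × ℝ → ℝ} (hV : ContDiff ℝ (⊤ : ℕ∞) V) (hw : WaveEq V)
    (hR : 1 ≤ R) (hK : 0 ≤ K) (h0 : Nice 3 R K ψ0) (h1 : Nice 3 R K ψ1)
    (i0 : (fun p => V (0, p)) = ψ0) (i1 : (fun p => dd ve0 V (0, p)) = ψ1)
    {t r : ℝ} (ht : 0 ≤ t) (hr : 0 < r) :
    |√r * dd ve0 V (t, r, 0) +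
        dF0 (fun a b => ψ0 (a, b)) (fun a b => ψ1 (a, b)) (r - t) 1 0| ≤
      5000000 * (2 * K) * R ^ 7 * Wt t r ∧
    |√r * dd ve1 V (t, r, 0) -
        dF0 (fun a b => ψ0 (a, b)) (fun a b => ψ1 (a, b)) (r - t) 1 0| ≤
      5000000 * (2 * K) * R ^ 7 * Wt t r ∧
    |√r * dd ve2 V (t, r, 0)| ≤ 5000000 * (2 * K) * R ^ 7 * Wt t r := by
  have hR0 : 0 < R := by linarith
  have hK2 : K ≤ 2 * K := by linarith
  rw [dF0_eq hR0.le h0 h1]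
  have sV := dd_smooth hV
  have r1 : (fun p => dd ve1 V (0, p)) = dd (1, 0) ψ0 := by rw [← i0]; exact restrict_dd hV (1, 0)
  have r2 : (fun p => dd ve2 V (0, p)) = dd (0, 1) ψ0 := by rw [← i0]; exact restrict_dd hV (0, 1)
  refine ⟨?_, ?_, ?_⟩
  -- `∂ₜV` has initial position `ψ1` and, by the equation at `t = 0`, initial velocity `Δψ0`
  · have g0 : (fun p => dd ve0 (dd ve0 V) (0, p)) =
        fun p => dd (1, 0) (dd (1, 0) ψ0) p + dd (0, 1) (dd (0, 1) ψ0) p := by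
      rw [← r1, ← r2, ← restrict_dd (sV ve1), ← restrict_dd (sV ve2)]
      ext p; exact hw.zero hV p
    have n11 : Nice 1 R K (dd (1, 0) (dd (1, 0) ψ0)) := (h0.dd unit1).dd unit1
    have n22 : Nice 1 R K (dd (0, 1) (dd (0, 1) ψ0)) := (h0.dd unit2).dd unit2
    have ig : ∫ y in box R, (dd (1, 0) (dd (1, 0) ψ0) y + dd (0, 1) (dd (0, 1) ψ0) y) = 0 := by
      rw [integral_add (integrableOn_box n11.cont) (integrableOn_box n22.cont),
        (h0.dd unit1).supp.mean1 hR0 (h0.dd unit1).smooth,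
        (h0.dd unit2).supp.mean2 hR0 (h0.dd unit2).smooth, add_zero]
    have D := mkDat hR (by linarith) ((h1.mono hK2).le (by norm_num : 2 ≤ 3)) (n11.add n22) ig
    have := D.core ht hr
    rw [← eq_Jf (sV ve0) (hw.dd hV ve0) i1 g0 ht r] at this
    rw [R2_hf hR0.le D.sf1 D.sg D.cf1 D.cg] at this
    have e := R2_lin hR0.le n11.supp n22.supp n11.cont n22.cont 1 1 (r - t)
    simp only [one_mul] at e
    rw [e, R2_d2 hR0.le (h0.dd unit2).supp (h0.dd unit2).smooth] at this
    convert this using 2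
    ring
  · have g1 : (fun p => dd ve0 (dd ve1 V) (0, p)) = dd (1, 0) ψ1 := by
      rw [dd_comm hV, ← i1]; exact restrict_dd (sV ve0) (1, 0)
    have D := mkDat hR (by linarith) ((h0.mono hK2).dd unit1)
      (((h1.mono hK2).dd unit1).le (by norm_num : 1 ≤ 2)) (h1.supp.mean1 hR0 h1.smooth)
    have := D.core ht hr
    rw [← eq_Jf (sV ve1) (hw.dd hV ve1) r1 g1 ht r] at this
    rw [R2_hf hR0.le D.sf1 D.sg D.cf1 D.cg] at this
    convert this using 2
    ring
  -- for `∂₂V` the limiting field `R₂[∂₂ψ1 - ∂₁∂₂ψ0]` vanishes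
  · have g2 : (fun p => dd ve0 (dd ve2 V) (0, p)) = dd (0, 1) ψ1 := by
      rw [dd_comm hV, ← i1]; exact restrict_dd (sV ve0) (0, 1)
    have D := mkDat hR (by linarith) ((h0.mono hK2).dd unit2)
      (((h1.mono hK2).dd unit2).le (by norm_num : 1 ≤ 2)) (h1.supp.mean2 hR0 h1.smooth)
    have := D.core ht hr
    rw [← eq_Jf (sV ve2) (hw.dd hV ve2) r2 g2 ht r] at this
    rw [R2_hf hR0.le D.sf1 D.sg D.cf1 D.cg] at this
    rw [R2_d2 hR0.le h1.supp h1.smooth, dd_comm h0.smooth,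
      R2_d2 hR0.le (h0.dd unit1).supp (h0.dd unit1).smooth] at this
    simpa using this

end

/-! ### Rotation invariance and conclusion -/

/-- The rotation `rotL a b` in the space variables, leaving the time fixed. -/
def rotT (a b : ℝ) : ℝ × ℝ × ℝ →L[ℝ] ℝ × ℝ × ℝ :=
  (ContinuousLinearMap.fst ℝ ℝ (ℝ × ℝ)).prod
    ((rotL a b).comp (ContinuousLinearMap.snd ℝ ℝ (ℝ × ℝ)))

theorem rotT_apply (a b : ℝ) (p : ℝ × ℝ × ℝ) :
    rotT a b p = (p.1, a * p.2.1 - b * p.2.2, b * p.2.1 + a * p.2.2) := by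
  simp [rotT, rotL_apply]

section
variable {U : ℝ × ℝ × ℝ → ℝ}

theorem dd0_rotT (hU : ContDiff ℝ (⊤ : ℕ∞) U) (a b : ℝ) :
    dd ve0 (fun p => U (rotT a b p)) = fun p => dd ve0 U (rotT a b p) := by
  rw [dd_comp hU]; simp [rotT_apply]

theorem dd1_rotT (hU : ContDiff ℝ (⊤ : ℕ∞) U) (a b : ℝ) :
    dd ve1 (fun p => U (rotT a b p)) =
      fun p => a * dd ve1 U (rotT a b p) + b * dd ve2 U (rotT a b p) := by
  rw [dd_comp hU]; ext p
  rw [rotT_apply, dd_split]; simp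

theorem dd2_rotT (hU : ContDiff ℝ (⊤ : ℕ∞) U) (a b : ℝ) :
    dd ve2 (fun p => U (rotT a b p)) =
      fun p => (-b) * dd ve1 U (rotT a b p) + a * dd ve2 U (rotT a b p) := by
  rw [dd_comp hU]; ext p
  rw [rotT_apply, dd_split]; simp

theorem rotT_smooth (hU : ContDiff ℝ (⊤ : ℕ∞) U) (a b : ℝ) :
    ContDiff ℝ (⊤ : ℕ∞) (fun p => U (rotT a b p)) := hU.comp (rotT a b).contDiff

/-- Rotation invariance of the wave equation. -/
theorem WaveEq.rot (hU : ContDiff ℝ (⊤ : ℕ∞) U) (hw : WaveEq U) {a b : ℝ}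
    (hab : a ^ 2 + b ^ 2 = 1) : WaveEq (fun p => U (rotT a b p)) := by
  intro p hp
  have h := hw (rotT a b p) (by rw [rotT_apply]; exact hp)
  have s1 := dd_smooth hU ve1
  have s2 := dd_smooth hU ve2
  rw [dd0_rotT hU, dd0_rotT (dd_smooth hU ve0), dd1_rotT hU, dd2_rotT hU,
    dd_add (rotT_smooth s1 a b) (rotT_smooth s2 a b),
    dd_add (rotT_smooth s1 a b) (rotT_smooth s2 a b),
    dd1_rotT s1, dd1_rotT s2, dd2_rotT s1, dd2_rotT s2, dd_comm hU ve2 ve1]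
  simp only
  rw [h]
  linear_combination (-(_root_.dd ve1 (_root_.dd ve1 U) (rotT a b p)) -
    _root_.dd ve2 (_root_.dd ve2 U) (rotT a b p)) * hab

end

/-- Uncurrying. -/
def unc (φ : ℝ → ℝ → ℝ → ℝ) (p : ℝ × ℝ × ℝ) : ℝ := φ p.1 p.2.1 p.2.2

theorem pt_eq {φ : ℝ → ℝ → ℝ → ℝ} (h : Smooth3 φ) :
    pt φ = fun t x y => dd ve0 (unc φ) (t, x, y) := by
  ext t x y
  exact (dd_curve (U := unc φ) h (c := fun s => (s, x, y))
    ((hasDerivAt_id t).prodMk (hasDerivAt_const t (x, y)))).deriv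

theorem p1_eq {φ : ℝ → ℝ → ℝ → ℝ} (h : Smooth3 φ) :
    p1 φ = fun t x y => dd ve1 (unc φ) (t, x, y) := by
  ext t x y
  exact (dd_curve (U := unc φ) h (c := fun s => (t, s, y))
    ((hasDerivAt_const x t).prodMk ((hasDerivAt_id x).prodMk (hasDerivAt_const x y)))).deriv

theorem p2_eq {φ : ℝ → ℝ → ℝ → ℝ} (h : Smooth3 φ) :
    p2 φ = fun t x y => dd ve2 (unc φ) (t, x, y) := by
  ext t x y
  exact (dd_curve (U := unc φ) h (c := fun s => (t, x, s))
    ((hasDerivAt_const y t).prodMk ((hasDerivAt_const y x).prodMk (hasDerivAt_id y)))).deriv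

theorem smooth3_curry {U : ℝ × ℝ × ℝ → ℝ} (hU : ContDiff ℝ (⊤ : ℕ∞) U) :
    Smooth3 (fun t x y => U (t, x, y)) := hU

theorem dAlembert_eq {φ : ℝ → ℝ → ℝ → ℝ} (h : Smooth3 φ) (t x y : ℝ) :
    dAlembert φ t x y = dd ve0 (dd ve0 (unc φ)) (t, x, y) - dd ve1 (dd ve1 (unc φ)) (t, x, y)
      - dd ve2 (dd ve2 (unc φ)) (t, x, y) := by
  have hU : ContDiff ℝ (⊤ : ℕ∞) (unc φ) := h
  rw [dAlembert, pt_eq h, p1_eq h, p2_eq h, pt_eq (smooth3_curry (dd_smooth hU _)),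
    p1_eq (smooth3_curry (dd_smooth hU _)), p2_eq (smooth3_curry (dd_smooth hU _))]
  rfl

theorem R2_rot (φ : ℝ → ℝ → ℝ) (a b σ : ℝ) :
    R2 φ σ a b = R2 (fun x y => φ (a * x - b * y) (b * x + a * y)) σ 1 0 := by
  have : ∀ s, Rline φ s a b = Rline (fun x y => φ (a * x - b * y) (b * x + a * y)) s 1 0 := by
    intro s
    unfold Rline
    congr 1
    ext τ
    congr 1 <;> ring
  simp only [R2, this]

theorem dF0_rot (φ0 φ1 : ℝ → ℝ → ℝ) (a b σ : ℝ) :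
    dF0 φ0 φ1 σ a b = dF0 (fun x y => φ0 (a * x - b * y) (b * x + a * y))
      (fun x y => φ1 (a * x - b * y) (b * x + a * y)) σ 1 0 := by
  unfold dF0 F0
  simp only [R2_rot φ0 a b, R2_rot φ1 a b]

theorem exists_Supp {ψ : ℝ × ℝ → ℝ} (h : HasCompactSupport ψ) : ∃ R, ∀ R', R ≤ R' → Supp R' ψ := by
  obtain ⟨M, hM⟩ := h.isCompact.isBounded.exists_norm_le
  -- the norm of `ℝ × ℝ` is the sup norm, whereas `Supp` refers to Euclidean discs
  refine ⟨2 * |M|, fun R' hR p hp => ?_⟩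
  by_contra hne
  have hm := hM p (subset_tsupport _ hne)
  have h1 : |p.1| ≤ |M| := (norm_fst_le p).trans (hm.trans (le_abs_self M))
  have h2 : |p.2| ≤ |M| := (norm_snd_le p).trans (hm.trans (le_abs_self M))
  have h3 : p.1 ^ 2 ≤ M ^ 2 := sq_le_sq.2 h1
  have h4 : p.2 ^ 2 ≤ M ^ 2 := sq_le_sq.2 h2
  have h5 : (2 * |M|) ^ 2 ≤ R' ^ 2 := pow_le_pow_left₀ (by positivity) hR 2
  rw [mul_pow, sq_abs] at h5
  nlinarith [sq_nonneg M]

theorem Wt_eq (t r : ℝ) :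
    jb (t + r) ^ (-(1:ℝ)) * jb (t - r) ^ (-(1:ℝ) / 2) = Wt t r := by
  have h : (-(1:ℝ) / 2) = -(1 / 2) := by norm_num
  rw [Wt, rpow_neg_one, h, rpow_neg (jb_pos _).le, ← Real.sqrt_eq_rpow]

theorem mul_small {a x ε : ℝ} (ha : |a| ≤ 1) (hx : |x| ≤ ε) : |a * x| ≤ ε := by
  rw [abs_mul]; exact (mul_le_of_le_one_left (abs_nonneg _) ha).trans hx

/-- the radiation field approximates `|x|^{1/2}∂φ` for the free
wave equation, with `ω₀ = −1`, `ω₁ = x₁/|x|`, `ω₂ = x₂/|x|`. -/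
theorem free_wave_radiation_field (φ0 φ1 : ℝ → ℝ → ℝ)
    (hφ0 : SmoothCompact2 φ0) (hφ1 : SmoothCompact2 φ1)
    (φ : ℝ → ℝ → ℝ → ℝ) (hφ : IsFreeSolution φ0 φ1 φ) :
    ∃ C : ℝ, 0 < C ∧
      ∀ t x1 x2 : ℝ, 0 ≤ t → ¬(x1 = 0 ∧ x2 = 0) →
        |radius x1 x2 ^ ((1 : ℝ) / 2) * pt φ t x1 x2
            - (-1) * dF0 φ0 φ1 (radius x1 x2 - t)
                (x1 / radius x1 x2) (x2 / radius x1 x2)|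
          ≤ C * jb (t + radius x1 x2) ^ (-(1 : ℝ))
            * jb (t - radius x1 x2) ^ (-(1 : ℝ) / 2) ∧
        |radius x1 x2 ^ ((1 : ℝ) / 2) * p1 φ t x1 x2
            - (x1 / radius x1 x2) * dF0 φ0 φ1 (radius x1 x2 - t)
                (x1 / radius x1 x2) (x2 / radius x1 x2)|
          ≤ C * jb (t + radius x1 x2) ^ (-(1 : ℝ))
            * jb (t - radius x1 x2) ^ (-(1 : ℝ) / 2) ∧
        |radius x1 x2 ^ ((1 : ℝ) / 2) * p2 φ t x1 x2
            - (x2 / radius x1 x2) * dF0 φ0 φ1 (radius x1 x2 - t)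
                (x1 / radius x1 x2) (x2 / radius x1 x2)|
          ≤ C * jb (t + radius x1 x2) ^ (-(1 : ℝ))
            * jb (t - radius x1 x2) ^ (-(1 : ℝ) / 2) := by
  obtain ⟨hS, hpde, hi0, hi1⟩ := hφ
  obtain ⟨R0, hR0⟩ := exists_Supp hφ0.2
  obtain ⟨R1, hR1⟩ := exists_Supp hφ1.2
  set R := max 1 (max R0 R1) with hRdef
  have hR : 1 ≤ R := le_max_left _ _
  have s0 := hR0 R ((le_max_left _ _).trans (le_max_right _ _))
  have s1 := hR1 R ((le_max_right _ _).trans (le_max_right _ _))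
  obtain ⟨K0, hK0, b0⟩ := BD.exists (by linarith) 3 hφ0.1 s0
  obtain ⟨K1, hK1, b1⟩ := BD.exists (by linarith) 3 hφ1.1 s1
  set K := K0 + K1 with hKdef
  have hK : 0 ≤ K := by positivity
  have n0 : Nice 3 R K (fun p : ℝ × ℝ => φ0 p.1 p.2) := ⟨hφ0.1, s0, b0.mono (by linarith)⟩
  have n1 : Nice 3 R K (fun p : ℝ × ℝ => φ1 p.1 p.2) := ⟨hφ1.1, s1, b1.mono (by linarith)⟩
  have hU : ContDiff ℝ (⊤ : ℕ∞) (unc φ) := hS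
  have hw : WaveEq (unc φ) := by
    intro p hp
    have := hpde p.1 p.2.1 p.2.2 hp
    rw [dAlembert_eq hS] at this
    linarith
  -- `c` is the constant on the axis; `∂₁` and `∂₂` are combinations of two rotated derivatives,
  -- which doubles it
  set c := 5000000 * (2 * K) * R ^ 7 with hc
  have hc0 : 0 ≤ c := by positivity
  refine ⟨2 * c + 1, by positivity, ?_⟩
  intro t x1 x2 ht hx
  set r := radius x1 x2 with hr
  have hpos : 0 < x1 ^ 2 + x2 ^ 2 := by
    by_cases h1 : x1 = 0
    · have h2 : x2 ≠ 0 := fun h2 => hx ⟨h1, h2⟩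
      positivity
    · positivity
  have hr0 : 0 < r := Real.sqrt_pos.2 hpos
  have hr2 : r ^ 2 = x1 ^ 2 + x2 ^ 2 := Real.sq_sqrt hpos.le
  obtain ⟨a, ha⟩ : ∃ a, a = x1 / r := ⟨_, rfl⟩
  obtain ⟨b, hb⟩ : ∃ b, b = x2 / r := ⟨_, rfl⟩
  have hab : a ^ 2 + b ^ 2 = 1 := by
    rw [ha, hb, div_pow, div_pow, ← add_div, ← hr2, div_self (by positivity)]
  have ha1 : |a| ≤ 1 := by
    rw [abs_le_one_iff_mul_self_le_one]; linarith [sq_nonneg b, pow_two a]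
  have hb1 : |b| ≤ 1 := by
    rw [abs_le_one_iff_mul_self_le_one]; linarith [sq_nonneg a, pow_two b]
  -- rotate `(x₁, x₂)` to the positive `x₁`-axis
  have hax : rotT a b (t, r, 0) = (t, x1, x2) := by
    rw [rotT_apply, ha, hb]
    simp only [mul_zero, sub_zero, add_zero]
    rw [div_mul_cancel₀ _ hr0.ne', div_mul_cancel₀ _ hr0.ne']
  have i0 : (fun p : ℝ × ℝ => (fun p => unc φ (rotT a b p)) (0, p)) =
      fun p => (fun p : ℝ × ℝ => φ0 p.1 p.2) (rotL a b p) := by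
    ext p
    simp only [rotT_apply, rotL_apply, unc, hi0]
  have i1 : (fun p : ℝ × ℝ => dd ve0 (fun p => unc φ (rotT a b p)) (0, p)) =
      fun p => (fun p : ℝ × ℝ => φ1 p.1 p.2) (rotL a b p) := by
    rw [dd0_rotT hU]
    ext p
    simp only [rotT_apply, rotL_apply, ← hi1, pt_eq hS]
  obtain ⟨e0, e1, e2⟩ := axis_asymptotics (rotT_smooth hU a b) (hw.rot hU hab) hR hK
    (n0.rot hab) (n1.rot hab) i0 i1 ht hr0
  rw [dd0_rotT hU] at e0
  rw [dd1_rotT hU] at e1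
  rw [dd2_rotT hU] at e2
  simp only [hax, rotL_apply] at e0 e1 e2
  rw [← dF0_rot φ0 φ1 a b] at e0 e1
  rw [← ha, ← hb, pt_eq hS, p1_eq hS, p2_eq hS, mul_assoc (2 * c + 1), Wt_eq,
    ← Real.sqrt_eq_rpow]
  have hW := Wt_nonneg t r
  have hcW : 0 ≤ c * Wt t r := by positivity
  -- the gradient is recovered from its rotated components, using `a² + b² = 1`
  set Φ := dF0 φ0 φ1 (r - t) a b
  set A := dd ve1 (unc φ) (t, x1, x2)
  set B := dd ve2 (unc φ) (t, x1, x2)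
  refine ⟨?_, ?_, ?_⟩
  · rw [neg_one_mul, sub_neg_eq_add]
    exact e0.trans (by linarith)
  · have m1 := mul_small ha1 e1
    have m2 := mul_small hb1 e2
    have e : √r * A - a * Φ =
        a * (√r * (a * A + b * B) - Φ) - b * (√r * (-b * A + a * B)) := by
      linear_combination (-(√r * A)) * hab
    rw [e]
    exact (abs_sub _ _).trans (by linarith)
  · have m1 := mul_small hb1 e1
    have m2 := mul_small ha1 e2
    have e : √r * B - b * Φ =
        b * (√r * (a * A + b * B) - Φ) + a * (√r * (-b * A + a * B)) := by
      linear_combination (-(√r * B)) * hab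
    rw [e]
    exact (abs_add_le _ _).trans (by linarith)

end
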